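/- For every CLL formula A and names z, w, s, there exists a CP+Mix0 process Sync^A_{z,w} (the synchronizer for A) with a typing derivation Sync^A_{z,w} ⊢ z:(A^⊥L)^⊥⊗⊥, w:((A^⊥)^⊥L)^⊥⊗⊥, s:1 whose denotation is ⟦Sync^A_{z,w}⟧ = { ((L_A a, *), (L_{A^⊥} a, *), *) | a ∈ ⟦A⟧ } (using that ⟦(A^⊥L)^⊥⊗⊥⟧ = ⟦A^⊥L⟧×{*} and ⟦((A^⊥)^⊥L)^⊥⊗⊥⟧ = ⟦(A^⊥)^⊥L⟧×{*}). -/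

import Mathlib

namespace PaS

/-! ### Names and CLL formulas (session types) -/

abbrev Name := ℕ

/-- CLL formulas / session types: `1, ⊥, ⊗, ⅋, ⊕, &, !, ?`. -/
inductive Form : Type
  | one
  | bot
  | tensor (A B : Form)
  | parr (A B : Form)
  | oplus (A B : Form)
  | wth (A B : Form)
  | bang (A : Form)
  | quest (A : Form)

/-- Duality on CLL formulas. -/
def Form.dual : Form → Form
  | .one => .bot
  | .bot => .one
  | .tensor A B => .parr A.dual B.dual
  | .parr A B => .tensor A.dual B.dual
  | .oplus A B => .wth A.dual B.dual
  | .wth A B => .oplus A.dual B.dual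
  | .bang A => .quest A.dual
  | .quest A => .bang A.dual

/-- Laurent's composed translation `(−)^⊥L` on CLL formulas (with parameter `R = 1`). -/
def transL : Form → Form
  | .one => .tensor .one .bot
  | .bot => .bot
  | .tensor A B => .tensor (.tensor (.parr (transL A) .one) (.parr (transL B) .one)) .bot
  | .parr A B => .parr (transL A) (transL B)
  | .oplus A B => .tensor (.oplus (.parr (transL A) .one) (.parr (transL B) .one)) .bot
  | .wth A B => .wth (transL A) (transL B)
  | .bang A => .tensor (.bang (.parr (transL A) .one)) .bot
  | .quest A => .quest (.tensor (.parr (transL A) .one) .bot)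

/-! ### Observation sets -/

/-- The set of observations `⟦A⟧` of a formula. -/
@[reducible] def Obs : Form → Type
  | .one => Unit
  | .bot => Unit
  | .tensor A B => Obs A × Obs B
  | .parr A B => Obs A × Obs B
  | .oplus A B => Obs A ⊕ Obs B
  | .wth A B => Obs A ⊕ Obs B
  | .bang A => Multiset (Obs A)
  | .quest A => Multiset (Obs A)

/-- Multiset congruence of equivalences. -/
def msCongr {α β : Type} (e : α ≃ β) : Multiset α ≃ Multiset β where
  toFun := Multiset.map e
  invFun := Multiset.map e.symm
  left_inv := fun m => by simp [Multiset.map_map, Function.comp]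
  right_inv := fun m => by simp [Multiset.map_map, Function.comp]

/-- The canonical identification `⟦A⟧ = ⟦A^⊥⟧`. -/
def dualObs : (A : Form) → Obs A ≃ Obs A.dual
  | .one => Equiv.refl Unit
  | .bot => Equiv.refl Unit
  | .tensor A B => (dualObs A).prodCongr (dualObs B)
  | .parr A B => (dualObs A).prodCongr (dualObs B)
  | .oplus A B => (dualObs A).sumCongr (dualObs B)
  | .wth A B => (dualObs A).sumCongr (dualObs B)
  | .bang A => msCongr (dualObs A)
  | .quest A => msCongr (dualObs A)

/-- The map `L_A : ⟦A⟧ → ⟦A^⊥L⟧`. -/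
def Lmap : (A : Form) → Obs A → Obs (transL A)
  | .one, _ => ((), ())
  | .bot, _ => ()
  | .tensor A B, o => (((Lmap A o.1, ()), (Lmap B o.2, ())), ())
  | .parr A B, o => (Lmap A o.1, Lmap B o.2)
  | .oplus A B, o =>
      (Sum.elim (fun a => Sum.inl (Lmap A a, ())) (fun b => Sum.inr (Lmap B b, ())) o, ())
  | .wth A B, o => Sum.elim (fun a => Sum.inl (Lmap A a)) (fun b => Sum.inr (Lmap B b)) o
  | .bang A, m => (Multiset.map (fun a => (Lmap A a, ())) m, ())
  | .quest A, m => Multiset.map (fun a => ((Lmap A a, ()), ())) m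

/-! ### Typing contexts and their observations -/

/-- A typing context: a finite list of assignments of formulas to names. -/
abbrev Ctx := List (Name × Form)

/-- Observations of a typing context: `⟦x₁:A₁,…,xₙ:Aₙ⟧ = ⟦A₁⟧×⋯×⟦Aₙ⟧`. -/
@[reducible] def ObsCtx : Ctx → Type
  | [] => Unit
  | p :: Γ => Obs p.2 × ObsCtx Γ

/-- Concatenation of observations. -/
def appObs : (Γ : Ctx) → {Δ : Ctx} → ObsCtx Γ → ObsCtx Δ → ObsCtx (Γ ++ Δ)
  | [], _, _, δ => δ
  | _ :: Γ, _, o, δ => (o.1, appObs Γ o.2 δ)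

/-- Laurent's translation on contexts, renaming names via `f`. -/
def ctxL (f : Name → Name) (Γ : Ctx) : Ctx := Γ.map (fun p => (f p.1, transL p.2))

/-- `L` applied componentwise to an observation of a context (without the final `*`). -/
def LmapCtx0 (f : Name → Name) : (Γ : Ctx) → ObsCtx Γ → ObsCtx (ctxL f Γ)
  | [], _ => ()
  | p :: Γ, o => (Lmap p.2 o.1, LmapCtx0 f Γ o.2)

/-- `L_Δ : ⟦Δ⟧ → ⟦Δ^⊥L, w:1⟧`, i.e. `L_Δ(a₁,…,aₙ) = (L a₁,…,L aₙ,*)`. -/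
def LmapCtx (f : Name → Name) (w : Name) (Γ : Ctx) (o : ObsCtx Γ) :
    ObsCtx (ctxL f Γ ++ [(w, Form.one)]) :=
  appObs (ctxL f Γ) (LmapCtx0 f Γ o) ((((), ()) : ObsCtx [(w, Form.one)]))

/-! ### One-sided sequent calculus for CLL + Mix0 -/

/-- One-sided sequent calculus for classical linear logic, extended with `Mix0`. -/
inductive CLLProof : Multiset Form → Prop
  | ax (A : Form) : CLLProof {A, A.dual}
  | one : CLLProof {Form.one}
  | mix0 : CLLProof 0
  | bot {Γ} : CLLProof Γ → CLLProof (Form.bot ::ₘ Γ)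
  | tensor {Γ Δ A B} : CLLProof (A ::ₘ Γ) → CLLProof (B ::ₘ Δ) →
      CLLProof (Form.tensor A B ::ₘ (Γ + Δ))
  | parr {Γ A B} : CLLProof (A ::ₘ B ::ₘ Γ) → CLLProof (Form.parr A B ::ₘ Γ)
  | oplusL {Γ A B} : CLLProof (A ::ₘ Γ) → CLLProof (Form.oplus A B ::ₘ Γ)
  | oplusR {Γ A B} : CLLProof (B ::ₘ Γ) → CLLProof (Form.oplus A B ::ₘ Γ)
  | wth {Γ A B} : CLLProof (A ::ₘ Γ) → CLLProof (B ::ₘ Γ) → CLLProof (Form.wth A B ::ₘ Γ)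
  | bang {Γ A} : (∀ C ∈ Γ, ∃ D, C = Form.quest D) → CLLProof (A ::ₘ Γ) →
      CLLProof (Form.bang A ::ₘ Γ)
  | quest {Γ A} : CLLProof (A ::ₘ Γ) → CLLProof (Form.quest A ::ₘ Γ)
  | weaken {Γ A} : CLLProof Γ → CLLProof (Form.quest A ::ₘ Γ)
  | contract {Γ A} : CLLProof (Form.quest A ::ₘ Form.quest A ::ₘ Γ) →
      CLLProof (Form.quest A ::ₘ Γ)
  | cut {Γ Δ A} : CLLProof (A ::ₘ Γ) → CLLProof (A.dual ::ₘ Δ) → CLLProof (Γ + Δ)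

/-! ### CP processes -/

/-- CP processes. -/
inductive Proc : Type
  | nil
  | fwd (x y : Name)
  | cut (x : Name) (P Q : Proc)
  | par (P Q : Proc)
  | out (x y : Name) (P Q : Proc)      -- x[y].(P|Q)
  | inp (x y : Name) (P : Proc)        -- x(y).P
  | server (x y : Name) (P : Proc)     -- !x(y).P
  | client (x y : Name) (P : Proc)     -- ?x[y].P
  | sel (x : Name) (i : Bool) (P : Proc)  -- x[1].P (false) / x[2].P (true)
  | cas (x : Name) (P Q : Proc)        -- x.case(P,Q)
  | close (x : Name)                   -- x[].0
  | wait (x : Name) (P : Proc)         -- x().P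

/-- Renaming: replace the name `b` by `a`. -/
def subName (a b n : Name) : Name := if n = b then a else n

/-- `P.rename a b` is `P{a/b}`. -/
def Proc.rename (a b : Name) : Proc → Proc
  | .nil => .nil
  | .fwd x y => .fwd (subName a b x) (subName a b y)
  | .cut x P Q => .cut (subName a b x) (P.rename a b) (Q.rename a b)
  | .par P Q => .par (P.rename a b) (Q.rename a b)
  | .out x y P Q => .out (subName a b x) (subName a b y) (P.rename a b) (Q.rename a b)
  | .inp x y P => .inp (subName a b x) (subName a b y) (P.rename a b)
  | .server x y P => .server (subName a b x) (subName a b y) (P.rename a b)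
  | .client x y P => .client (subName a b x) (subName a b y) (P.rename a b)
  | .sel x i P => .sel (subName a b x) i (P.rename a b)
  | .cas x P Q => .cas (subName a b x) (P.rename a b) (Q.rename a b)
  | .close x => .close (subName a b x)
  | .wait x P => .wait (subName a b x) (P.rename a b)

/-- A `?`-context `?Θ`, i.e. one where every formula is a `?`-formula. -/
def QCtx (Θ : List (Name × Form)) : Ctx := Θ.map (fun p => (p.1, Form.quest p.2))

/-- The empty observation of a `?`-context. -/
def qZero : (Θ : List (Name × Form)) → ObsCtx (QCtx Θ)
  | [] => ()
  | p :: Θ => ((0 : Multiset (Obs p.2)), qZero Θ)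

/-- Componentwise multiset union of observations of a `?`-context. -/
def qAdd : (Θ : List (Name × Form)) → ObsCtx (QCtx Θ) → ObsCtx (QCtx Θ) → ObsCtx (QCtx Θ)
  | [], _, _ => ()
  | p :: Θ, o, o' => ((o.1 + o'.1 : Multiset (Obs p.2)), qAdd Θ o.2 o'.2)

/-- Componentwise multiset union of a list of observations of a `?`-context. -/
def qSum (Θ : List (Name × Form)) (l : List (ObsCtx (QCtx Θ))) : ObsCtx (QCtx Θ) :=
  l.foldr (qAdd Θ) (qZero Θ)

/-! ### Typing for CP + Mix0, Mix2 -/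

/-- Typing judgments `P ⊢ Γ` of CP + Mix0 + Mix2 (implicit exchange). -/
inductive Types : Proc → Ctx → Prop
  | fwd (x y : Name) (A : Form) : Types (.fwd x y) [(x, A), (y, A.dual)]
  | close (x : Name) : Types (.close x) [(x, .one)]
  | nil : Types .nil []
  | wait (x : Name) {P Γ} : Types P Γ → Types (.wait x P) ((x, .bot) :: Γ)
  | out (x y : Name) {P Q : Proc} {A B Γ Δ} :
      Types P ((y, A) :: Γ) → Types Q ((x, B) :: Δ) →
      Types (.out x y P Q) ((x, .tensor A B) :: (Γ ++ Δ))
  | inp (x y : Name) {P : Proc} {A B Γ} :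
      Types P ((y, A) :: (x, B) :: Γ) → Types (.inp x y P) ((x, .parr A B) :: Γ)
  | selL (x : Name) {P : Proc} {A₁ A₂ Γ} :
      Types P ((x, A₁) :: Γ) → Types (.sel x false P) ((x, .oplus A₁ A₂) :: Γ)
  | selR (x : Name) {P : Proc} {A₁ A₂ Γ} :
      Types P ((x, A₂) :: Γ) → Types (.sel x true P) ((x, .oplus A₁ A₂) :: Γ)
  | cas (x : Name) {P Q : Proc} {A₁ A₂ Γ} :
      Types P ((x, A₁) :: Γ) → Types Q ((x, A₂) :: Γ) →
      Types (.cas x P Q) ((x, .wth A₁ A₂) :: Γ)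
  | server (x y : Name) {P : Proc} {A : Form} {Θ : List (Name × Form)} :
      Types P ((y, A) :: QCtx Θ) → Types (.server x y P) ((x, .bang A) :: QCtx Θ)
  | client (x y : Name) {P : Proc} {A Γ} :
      Types P ((y, A) :: Γ) → Types (.client x y P) ((x, .quest A) :: Γ)
  | weaken (x : Name) (A : Form) {P Γ} : Types P Γ → Types P ((x, .quest A) :: Γ)
  | contract (x₁ x₂ : Name) (A : Form) {P Γ} :
      Types P ((x₁, .quest A) :: (x₂, .quest A) :: Γ) →
      Types (P.rename x₁ x₂) ((x₁, .quest A) :: Γ)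
  | cut (x : Name) {P Q : Proc} {A Γ Δ} :
      Types P ((x, A) :: Γ) → Types Q ((x, A.dual) :: Δ) → Types (.cut x P Q) (Γ ++ Δ)
  | mix2 {P Q : Proc} {Γ Δ} : Types P Γ → Types Q Δ → Types (.par P Q) (Γ ++ Δ)
  | exch {P : Proc} {Γ Δ} : Types P Γ → Γ.Perm Δ → Types P Δ

/-! ### Atkey's denotational semantics (observed communications) -/

/-- Action of a context permutation on observations. -/
inductive ObsPerm : (Γ Δ : Ctx) → ObsCtx Γ → ObsCtx Δ → Prop
  | nil : ObsPerm [] [] () ()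
  | cons (p : Name × Form) {Γ Δ : Ctx} (a : Obs p.2) {o : ObsCtx Γ} {o' : ObsCtx Δ} :
      ObsPerm Γ Δ o o' → ObsPerm (p :: Γ) (p :: Δ) (a, o) (a, o')
  | swap (p q : Name × Form) (Γ : Ctx) (a : Obs p.2) (b : Obs q.2) (o : ObsCtx Γ) :
      ObsPerm (p :: q :: Γ) (q :: p :: Γ) (a, b, o) (b, a, o)
  | trans {Γ Δ Θ : Ctx} {o₁ : ObsCtx Γ} {o₂ : ObsCtx Δ} {o₃ : ObsCtx Θ} :
      ObsPerm Γ Δ o₁ o₂ → ObsPerm Δ Θ o₂ o₃ → ObsPerm Γ Θ o₁ o₃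

/-- Atkey's denotational semantics: `Den P Γ o` holds iff `o ∈ ⟦P ⊢ Γ⟧`
(for some typing derivation of `P ⊢ Γ`). -/
inductive Den : Proc → (Γ : Ctx) → ObsCtx Γ → Prop
  | fwd (x y : Name) (A : Form) (a : Obs A) :
      Den (.fwd x y) [(x, A), (y, A.dual)] (a, dualObs A a, ())
  | close (x : Name) : Den (.close x) [(x, .one)] ((), ())
  | nil : Den .nil [] ()
  | wait (x : Name) {P Γ} {o : ObsCtx Γ} :
      Den P Γ o → Den (.wait x P) ((x, .bot) :: Γ) ((), o)
  | out (x y : Name) {P Q : Proc} {A B : Form} {Γ Δ : Ctx}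
      {a : Obs A} {b : Obs B} {γ : ObsCtx Γ} {δ : ObsCtx Δ} :
      Den P ((y, A) :: Γ) (a, γ) → Den Q ((x, B) :: Δ) (b, δ) →
      Den (.out x y P Q) ((x, .tensor A B) :: (Γ ++ Δ)) ((a, b), appObs Γ γ δ)
  | inp (x y : Name) {P : Proc} {A B : Form} {Γ : Ctx}
      {a : Obs A} {b : Obs B} {γ : ObsCtx Γ} :
      Den P ((y, A) :: (x, B) :: Γ) (a, (b, γ)) →
      Den (.inp x y P) ((x, .parr A B) :: Γ) ((a, b), γ)
  | selL (x : Name) {P : Proc} {A₁ A₂ : Form} {Γ} {a : Obs A₁} {γ : ObsCtx Γ} :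
      Den P ((x, A₁) :: Γ) (a, γ) →
      Den (.sel x false P) ((x, .oplus A₁ A₂) :: Γ) (Sum.inl a, γ)
  | selR (x : Name) {P : Proc} {A₁ A₂ : Form} {Γ} {a : Obs A₂} {γ : ObsCtx Γ} :
      Den P ((x, A₂) :: Γ) (a, γ) →
      Den (.sel x true P) ((x, .oplus A₁ A₂) :: Γ) (Sum.inr a, γ)
  | casL (x : Name) {P Q : Proc} {A₁ A₂ : Form} {Γ} {a : Obs A₁} {γ : ObsCtx Γ} :
      Den P ((x, A₁) :: Γ) (a, γ) → Types Q ((x, A₂) :: Γ) →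
      Den (.cas x P Q) ((x, .wth A₁ A₂) :: Γ) (Sum.inl a, γ)
  | casR (x : Name) {P Q : Proc} {A₁ A₂ : Form} {Γ} {a : Obs A₂} {γ : ObsCtx Γ} :
      Types P ((x, A₁) :: Γ) → Den Q ((x, A₂) :: Γ) (a, γ) →
      Den (.cas x P Q) ((x, .wth A₁ A₂) :: Γ) (Sum.inr a, γ)
  | server (x y : Name) {P : Proc} {A : Form} {Θ : List (Name × Form)}
      (runs : List (Obs A × ObsCtx (QCtx Θ))) :
      Types P ((y, A) :: QCtx Θ) →
      (∀ r ∈ runs, Den P ((y, A) :: QCtx Θ) (r.1, r.2)) →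
      Den (.server x y P) ((x, .bang A) :: QCtx Θ)
        ((↑(runs.map Prod.fst) : Multiset (Obs A)), qSum Θ (runs.map Prod.snd))
  | client (x y : Name) {P : Proc} {A Γ} {a : Obs A} {γ : ObsCtx Γ} :
      Den P ((y, A) :: Γ) (a, γ) →
      Den (.client x y P) ((x, .quest A) :: Γ) (({a} : Multiset (Obs A)), γ)
  | weaken (x : Name) (A : Form) {P Γ} {o : ObsCtx Γ} :
      Den P Γ o → Den P ((x, .quest A) :: Γ) ((0 : Multiset (Obs A)), o)
  | contract (x₁ x₂ : Name) (A : Form) {P Γ} {α₁ α₂ : Multiset (Obs A)} {δ : ObsCtx Γ} :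
      Den P ((x₁, .quest A) :: (x₂, .quest A) :: Γ) (α₁, (α₂, δ)) →
      Den (P.rename x₁ x₂) ((x₁, .quest A) :: Γ) (α₁ + α₂, δ)
  | cut (x : Name) {P Q : Proc} {A Γ Δ} (a : Obs A) {γ : ObsCtx Γ} {δ : ObsCtx Δ} :
      Den P ((x, A) :: Γ) (a, γ) → Den Q ((x, A.dual) :: Δ) (dualObs A a, δ) →
      Den (.cut x P Q) (Γ ++ Δ) (appObs Γ γ δ)
  | mix2 {P Q : Proc} {Γ Δ} {γ : ObsCtx Γ} {δ : ObsCtx Δ} :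
      Den P Γ γ → Den Q Δ δ → Den (.par P Q) (Γ ++ Δ) (appObs Γ γ δ)
  | exch {P : Proc} {Γ Δ} {o : ObsCtx Γ} {o' : ObsCtx Δ} :
      Den P Γ o → ObsPerm Γ Δ o o' → Den P Δ o'

/-- `⟦P ⊢ Γ⟧ ⊆ ⟦Γ⟧`. -/
def Sem (P : Proc) (Γ : Ctx) : Set (ObsCtx Γ) := {o | Den P Γ o}

/-- Observational equivalence `P ≅ Q` at `Γ` (equality of denotations, which
coincides with Atkey's observational equivalence by adequacy). -/
def ObsEq (P Q : Proc) (Γ : Ctx) : Prop := Sem P Γ = Sem Q Γ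

/-! ### Transformer processes and transformer contexts -/

/-- Transformer processes `T^A_{x,x'}`; the extra argument `k` is a supply of
fresh names (all names `≥ k` are fresh). -/
def Transf : Form → Name → Name → Name → Proc
  | .bot, x, x', _ => .fwd x x'
  | .one, x, x', k => .out x' k (.fwd k x) (.wait x' .nil)
  | .tensor A B, x, z, k =>
      .inp x k (.out z (k+1)
        (.out (k+1) (k+2)
          (.inp (k+2) (k+3) (.par (Transf A k (k+3) (k+5)) (.close (k+2))))
          (.inp (k+1) (k+4) (.par (Transf B x (k+4) (k+5)) (.close (k+1)))))
        (.wait z .nil))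
  | .parr A B, x, x', k =>
      .inp x' k (.inp x (k+1) (.par (Transf A (k+1) k (k+2)) (Transf B x x' (k+2))))
  | .bang A, x, x', k =>
      .out x' k (.server k (k+1) (.client x (k+2) (.inp (k+1) (k+3)
          (.par (Transf A (k+2) (k+3) (k+4)) (.close (k+1)))))) (.wait x' .nil)
  | .quest A, x, x', k =>
      .server x k (.client x' (k+1) (.out (k+1) (k+2)
          (.inp (k+2) (k+3) (.par (Transf A k (k+3) (k+4)) (.close (k+2))))
          (.wait (k+1) .nil)))
  | .wth A B, x, x', k =>
      .cas x' (.sel x false (Transf A x x' k)) (.sel x true (Transf B x x' k))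
  | .oplus A B, x, x', k =>
      .cas x
        (.out x' k (.sel k false (.inp k (k+1) (.par (Transf A x (k+1) (k+2)) (.close k))))
          (.wait x' .nil))
        (.out x' k (.sel k true (.inp k (k+1) (.par (Transf B x (k+1) (k+2)) (.close k))))
          (.wait x' .nil))

/-- The transformer process `T^A_{x,x'} ⊢ x:A^⊥, x':A^⊥L`. -/
def TransfP (A : Form) (x x' : Name) : Proc := Transf A x x' (max x x' + 1)

/-- The transformer context `T_Δ^{-}[·]` applied to `P`:
`(νxₙ)(⋯((νx₁)(P | T^{A₁}_{x₁,f x₁})⋯) | T^{Aₙ}_{xₙ,f xₙ})`. -/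
def TCtxFill (f : Name → Name) : Ctx → Proc → Proc
  | [], P => P
  | (x, A) :: Δ, P => TCtxFill f Δ (.cut x P (TransfP A x (f x)))

/-- The transformer context with closing name `z`: `T_Δ[P] = T_Δ^{-}[P] | z[].0`. -/
def TCtx (f : Name → Name) (Δ : Ctx) (z : Name) (P : Proc) : Proc :=
  .par (TCtxFill f Δ P) (.close z)

/-! ### Typed process contexts with one hole -/

/-- Process contexts with one hole: `K ::= [·] | (νx)(K|Q) | K|Q`. -/
inductive PCtx : Type
  | hole
  | cut (x : Name) (K : PCtx) (Q : Proc)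
  | par (K : PCtx) (Q : Proc)

/-- Filling the hole of a context. -/
def PCtx.fill : PCtx → Proc → Proc
  | .hole, P => P
  | .cut x K Q, P => .cut x (K.fill P) Q
  | .par K Q, P => .par (K.fill P) Q

/-- Composition of contexts (plug the second into the hole of the first). -/
def PCtx.comp : PCtx → PCtx → PCtx
  | .hole, K' => K'
  | .cut x K Q, K' => .cut x (K.comp K') Q
  | .par K Q, K' => .par (K.comp K') Q

/-- Context typing `K : Δ ⊢ Γ`. -/
inductive PCtxTy : PCtx → Ctx → Ctx → Prop
  | hole (Δ : Ctx) : PCtxTy .hole Δ Δ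
  | cut {K : PCtx} {Δ Γ Δ' : Ctx} {x : Name} {A : Form} {Q : Proc} :
      PCtxTy K Δ ((x, A) :: Γ) → Types Q ((x, A.dual) :: Δ') →
      PCtxTy (.cut x K Q) Δ (Γ ++ Δ')
  | par {K : PCtx} {Δ Γ Δ' : Ctx} {Q : Proc} :
      PCtxTy K Δ Γ → Types Q Δ' → PCtxTy (.par K Q) Δ (Γ ++ Δ')

/-- The set-level function `⟦K⟧ : 𝒫(⟦Δ⟧) → 𝒫(⟦Γ⟧)` induced by a context, as a relation:
`KSem K Δ Γ X o` holds iff `o ∈ ⟦K⟧(X)`. -/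
inductive KSem : (K : PCtx) → (Δ Γ : Ctx) → Set (ObsCtx Δ) → ObsCtx Γ → Prop
  | hole {Δ : Ctx} {X : Set (ObsCtx Δ)} {o : ObsCtx Δ} : o ∈ X → KSem .hole Δ Δ X o
  | cut {K : PCtx} {Δ Γ Δ' : Ctx} {x : Name} {A : Form} {Q : Proc}
      {X : Set (ObsCtx Δ)} (a : Obs A) {σ : ObsCtx Γ} {γ : ObsCtx Δ'} :
      KSem K Δ ((x, A) :: Γ) X (a, σ) →
      (dualObs A a, γ) ∈ Sem Q ((x, A.dual) :: Δ') →
      KSem (.cut x K Q) Δ (Γ ++ Δ') X (appObs Γ σ γ)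
  | par {K : PCtx} {Δ Γ Δ' : Ctx} {Q : Proc}
      {X : Set (ObsCtx Δ)} {σ : ObsCtx Γ} {γ : ObsCtx Δ'} :
      KSem K Δ Γ X σ → γ ∈ Sem Q Δ' → KSem (.par K Q) Δ (Γ ++ Δ') X (appObs Γ σ γ)

/-- The transformer context `T_Δ^{-}[·]` as a process context. -/
def TPCtxMinus (f : Name → Name) : Ctx → PCtx
  | [] => .hole
  | (x, A) :: Δ => (TPCtxMinus f Δ).comp (.cut x .hole (TransfP A x (f x)))

/-- The transformer context with closing name `w` as a process context. -/
def TPCtx (f : Name → Name) (Δ : Ctx) (w : Name) : PCtx :=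
  .par (TPCtxMinus f Δ) (.close w)


/-! By induction on `A` one builds a process with endpoints `(A^⊥L)^⊥` and `((A^⊥)^⊥L)^⊥` whose
denotation is the graph `{(L_A a, L_{A^⊥} a) | a ∈ ⟦A⟧}`. Exchanging the two endpoints turns a
process for `A` into one for `A^⊥`, so `1`, `⊗`, `⊕` and `!` suffice. In a context without
`?`-formulas the last rule of a derivation is dictated by the process, and its denotation can be
computed by inversion.

For `!A` a server offers arbitrarily many fresh copies of the process for `A`, each packaged as a
pair of endpoints, on a pool channel; every request to `!` draws one package and connects its
ends to the request and to a new query. The pool channel is cut, so a derivation may give it any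
formula, and it is of `?`-type for the process that draws from it, so inversion fails. One
instead counts the queries made in a run, whatever names they carry: the shapes of their formulas
allow the forwarders to match them in one way only, each request with one query and one package.
-/

/-! ### Multisets -/

theorem add_eq_pair_iff {α : Type*} {M N : Multiset α} {a b : α} :
    M + N = {a, b} ↔ (M = {a} ∧ N = {b}) ∨ (M = 0 ∧ N = {a, b}) ∨ (M = {b} ∧ N = {a}) ∨
      (M = {a, b} ∧ N = 0) := by
  have h : M + N = {a, b} ↔ (M, N) ∈ Multiset.antidiagonal {a, b} :=
    (Multiset.mem_antidiagonal (x := (M, N))).symm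
  rw [h, Multiset.insert_eq_cons, Multiset.antidiagonal_cons, ← Multiset.cons_zero b,
    Multiset.antidiagonal_cons]
  simp

theorem cons_singleton_comm {α : Type*} (a b : α) : a ::ₘ {b} = b ::ₘ ({a} : Multiset α) :=
  Multiset.pair_comm a b

theorem cons_cons_singleton_rotate {α : Type*} (a b c : α) :
    a ::ₘ b ::ₘ {c} = c ::ₘ a ::ₘ ({b} : Multiset α) := by
  rw [cons_singleton_comm b, Multiset.cons_swap]

theorem left_eq_of_add_eq_add {α : Type*} {p : α → Prop} {s t s' t' : Multiset α}
    (hs : ∀ a ∈ s, p a) (ht : ∀ a ∈ t, ¬ p a) (hs' : ∀ a ∈ s', p a) (ht' : ∀ a ∈ t', ¬ p a)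
    (h : s + t = s' + t') : s = s' := by
  classical
  simpa only [Multiset.filter_add, Multiset.filter_eq_self.2 hs, Multiset.filter_eq_nil.2 ht,
    Multiset.filter_eq_self.2 hs', Multiset.filter_eq_nil.2 ht', add_zero]
    using congrArg (Multiset.filter p) h

theorem exists_eq_map_of_forall_mem {α β : Type*} {p : α → Prop} {f : α → β} {t : Multiset β}
    (h : ∀ b ∈ t, ∃ a, p a ∧ b = f a) : ∃ s : Multiset α, (∀ a ∈ s, p a) ∧ t = s.map f := by
  induction t using Multiset.induction with
  | empty => exact ⟨0, by simp, rfl⟩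
  | cons b t ih =>
    obtain ⟨a, ha, rfl⟩ := h b (Multiset.mem_cons_self _ _)
    obtain ⟨s, hs, rfl⟩ := ih fun b hb => h b (Multiset.mem_cons_of_mem hb)
    exact ⟨a ::ₘ s, by simpa [ha] using hs, (Multiset.map_cons _ _ _).symm⟩

/-! ### Contexts as multisets -/

/-- A formula together with one of its observations. -/
abbrev TypedObs := (A : Form) × Obs A

/-- A typed observation located at a name: one component of an observation of a context. -/
abbrev NamedObs := Name × TypedObs

/-- The observation `a ∈ ⟦A⟧` located at the name `x`. -/
def ent (x : Name) (A : Form) (a : Obs A) : NamedObs := (x, ⟨A, a⟩)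

/-- An observation of a context as a multiset, which makes exchange invisible. -/
def entries : (Γ : Ctx) → ObsCtx Γ → Multiset NamedObs
  | [], _ => 0
  | p :: Γ, o => ent p.1 p.2 o.1 ::ₘ entries Γ o.2

theorem entries_appObs (Γ : Ctx) {Δ : Ctx} (γ : ObsCtx Γ) (δ : ObsCtx Δ) :
    entries (Γ ++ Δ) (appObs Γ γ δ) = entries Γ γ + entries Δ δ := by
  induction Γ with
  | nil => simp [entries, appObs]
  | cons p Γ ih => simp [entries, appObs, ih]

theorem ObsPerm.entries_eq {Γ Δ : Ctx} {o : ObsCtx Γ} {o' : ObsCtx Δ} (h : ObsPerm Γ Δ o o') :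
    entries Γ o = entries Δ o' := by
  induction h with
  | nil => rfl
  | cons p a _ ih => simp only [entries, ih]
  | swap p q Γ a b o => exact Multiset.cons_swap _ _ _
  | trans _ _ ih₁ ih₂ => exact ih₁.trans ih₂

theorem ObsPerm.refl : (Γ : Ctx) → (o : ObsCtx Γ) → ObsPerm Γ Γ o o
  | [], _ => .nil
  | p :: Γ, o => .cons p o.1 (ObsPerm.refl Γ o.2)

theorem exists_obsPerm_cons_of_mem {e : NamedObs} : (Γ : Ctx) → (o : ObsCtx Γ) →
    e ∈ entries Γ o →
    ∃ (Γ' : Ctx) (o' : ObsCtx Γ'), ObsPerm ((e.1, e.2.1) :: Γ') Γ (e.2.2, o') o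
  | [], _, h => absurd h (Multiset.notMem_zero e)
  | p :: Γ, o, h => by
    obtain rfl | h := Multiset.mem_cons.1 h
    · exact ⟨Γ, o.2, .refl (p :: Γ) o⟩
    · obtain ⟨Γ', o', h'⟩ := exists_obsPerm_cons_of_mem Γ o.2 h
      have swapped := ObsPerm.swap (e.1, e.2.1) p Γ' e.2.2 o.1 o'
      exact ⟨p :: Γ', (o.1, o'), swapped.trans (.cons p o.1 h')⟩

theorem obsPerm_of_entries_eq : (Γ Δ : Ctx) → (o : ObsCtx Γ) → (o' : ObsCtx Δ) →
    entries Γ o = entries Δ o' → ObsPerm Γ Δ o o'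
  | [], [], _, _, _ => .nil
  | [], _ :: _, _, _, h => absurd h Multiset.zero_ne_cons
  | p :: Γ, Δ, o, o', h => by
    have mem_Δ : ent p.1 p.2 o.1 ∈ entries Δ o' := h ▸ Multiset.mem_cons_self _ _
    obtain ⟨Γ', γ, hΔ⟩ := exists_obsPerm_cons_of_mem Δ o' mem_Δ
    have tail_eq : entries Γ o.2 = entries Γ' γ :=
      (Multiset.cons_inj_right _).1 (h.trans hΔ.entries_eq.symm)
    exact (ObsPerm.cons p o.1 (obsPerm_of_entries_eq Γ Γ' o.2 γ tail_eq)).trans hΔ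

theorem exists_entries_eq (M : Multiset NamedObs) :
    ∃ (Γ : Ctx) (o : ObsCtx Γ), entries Γ o = M := by
  induction M using Multiset.induction_on with
  | empty => exact ⟨[], (), rfl⟩
  | cons e M ih =>
    obtain ⟨Γ, o, rfl⟩ := ih
    exact ⟨(e.1, e.2.1) :: Γ, (e.2.2, o), rfl⟩

/-- `Den` on contexts taken up to exchange: `M` is in the denotation of `P`. -/
def Denotes (P : Proc) (M : Multiset NamedObs) : Prop :=
  ∃ (Γ : Ctx) (o : ObsCtx Γ), entries Γ o = M ∧ Den P Γ o

theorem denotes_entries {P : Proc} {Γ : Ctx} {o : ObsCtx Γ} :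
    Denotes P (entries Γ o) ↔ Den P Γ o :=
  ⟨fun ⟨_, _, h, hP⟩ => .exch hP (obsPerm_of_entries_eq _ _ _ _ h), fun hP => ⟨Γ, o, rfl, hP⟩⟩

theorem denotes_cons_entries {P : Proc} {Γ : Ctx} {x : Name} {A : Form} {a : Obs A}
    {γ : ObsCtx Γ} : Denotes P (ent x A a ::ₘ entries Γ γ) ↔ Den P ((x, A) :: Γ) (a, γ) :=
  denotes_entries (Γ := (x, A) :: Γ) (o := (a, γ))

/-- `Types` on contexts taken up to exchange. -/
def HasType (P : Proc) (M : Multiset (Name × Form)) : Prop :=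
  ∃ Γ : Ctx, (Γ : Multiset (Name × Form)) = M ∧ Types P Γ

theorem hasType_coe {P : Proc} {Γ : Ctx} : HasType P Γ ↔ Types P Γ :=
  ⟨fun ⟨_, h, hP⟩ => .exch hP (Multiset.coe_eq_coe.1 h), fun hP => ⟨Γ, rfl, hP⟩⟩

section Rules

variable {x y : Name} {P Q : Proc} {A B : Form}

namespace HasType

variable {M N : Multiset (Name × Form)}

theorem nil : HasType .nil 0 := ⟨[], rfl, .nil⟩

theorem close : HasType (.close x) {(x, .one)} := ⟨[_], rfl, .close x⟩

theorem wait (h : HasType P M) : HasType (.wait x P) ((x, .bot) ::ₘ M) := by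
  obtain ⟨Γ, rfl, h⟩ := h
  exact ⟨_ :: Γ, rfl, .wait x h⟩

theorem out (hP : HasType P ((y, A) ::ₘ M)) (hQ : HasType Q ((x, B) ::ₘ N)) :
    HasType (.out x y P Q) ((x, .tensor A B) ::ₘ (M + N)) := by
  induction M using Quotient.inductionOn with | _ Γ
  induction N using Quotient.inductionOn with | _ Δ
  exact ⟨_ :: (Γ ++ Δ), rfl, .out x y (hasType_coe.1 hP) (hasType_coe.1 hQ)⟩

theorem inp (h : HasType P ((y, A) ::ₘ (x, B) ::ₘ M)) :
    HasType (.inp x y P) ((x, .parr A B) ::ₘ M) := by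
  induction M using Quotient.inductionOn with | _ Γ
  exact ⟨_ :: Γ, rfl, .inp x y (hasType_coe.1 h)⟩

theorem selL (h : HasType P ((x, A) ::ₘ M)) :
    HasType (.sel x false P) ((x, .oplus A B) ::ₘ M) := by
  induction M using Quotient.inductionOn with | _ Γ
  exact ⟨_ :: Γ, rfl, .selL x (hasType_coe.1 h)⟩

theorem selR (h : HasType P ((x, B) ::ₘ M)) :
    HasType (.sel x true P) ((x, .oplus A B) ::ₘ M) := by
  induction M using Quotient.inductionOn with | _ Γ
  exact ⟨_ :: Γ, rfl, .selR x (hasType_coe.1 h)⟩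

theorem cas (hP : HasType P ((x, A) ::ₘ M)) (hQ : HasType Q ((x, B) ::ₘ M)) :
    HasType (.cas x P Q) ((x, .wth A B) ::ₘ M) := by
  induction M using Quotient.inductionOn with | _ Γ
  exact ⟨_ :: Γ, rfl, .cas x (hasType_coe.1 hP) (hasType_coe.1 hQ)⟩

theorem par (hP : HasType P M) (hQ : HasType Q N) : HasType (.par P Q) (M + N) := by
  obtain ⟨Γ, rfl, hP⟩ := hP
  obtain ⟨Δ, rfl, hQ⟩ := hQ
  exact ⟨Γ ++ Δ, rfl, .mix2 hP hQ⟩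

theorem cut (hP : HasType P ((x, A) ::ₘ M)) (hQ : HasType Q ((x, A.dual) ::ₘ N)) :
    HasType (.cut x P Q) (M + N) := by
  induction M using Quotient.inductionOn with | _ Γ
  induction N using Quotient.inductionOn with | _ Δ
  exact ⟨Γ ++ Δ, rfl, .cut x (hasType_coe.1 hP) (hasType_coe.1 hQ)⟩

theorem fwd : HasType (.fwd x y) {(x, A), (y, A.dual)} := ⟨_, rfl, .fwd x y A⟩

theorem client (h : HasType P ((y, A) ::ₘ M)) :
    HasType (.client x y P) ((x, .quest A) ::ₘ M) := by
  induction M using Quotient.inductionOn with | _ Γ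
  exact ⟨_ :: Γ, rfl, .client x y (hasType_coe.1 h)⟩

theorem server {Θ : List (Name × Form)} (h : HasType P ((y, A) ::ₘ ↑(QCtx Θ))) :
    HasType (.server x y P) ((x, .bang A) ::ₘ ↑(QCtx Θ)) :=
  hasType_coe.2 (.server x y (hasType_coe.1 h))

end HasType

/-- The assignment of a formula to a name underlying a named observation. -/
def typing (e : NamedObs) : Name × Form := (e.1, e.2.1)

theorem map_typing_entries : (Γ : Ctx) → (o : ObsCtx Γ) →
    (entries Γ o).map typing = (Γ : Multiset (Name × Form))
  | [], _ => rfl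
  | p :: Γ, o => by simp [entries, map_typing_entries Γ, ent, typing]

namespace Denotes

variable {M N : Multiset NamedObs} {a : Obs A} {b : Obs B}

theorem nil : Denotes .nil 0 := ⟨[], (), rfl, .nil⟩

theorem close : Denotes (.close x) {ent x .one ()} := ⟨[(x, .one)], ((), ()), rfl, .close x⟩

theorem fwd : Denotes (.fwd x y) {ent x A a, ent y A.dual (dualObs A a)} :=
  ⟨[(x, A), (y, A.dual)], (a, dualObs A a, ()), rfl, .fwd x y A a⟩

theorem wait (h : Denotes P M) : Denotes (.wait x P) (ent x .bot () ::ₘ M) := by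
  obtain ⟨Γ, o, rfl, h⟩ := h
  exact ⟨(x, .bot) :: Γ, ((), o), rfl, .wait x h⟩

theorem out (hP : Denotes P (ent y A a ::ₘ M)) (hQ : Denotes Q (ent x B b ::ₘ N)) :
    Denotes (.out x y P Q) (ent x (.tensor A B) (a, b) ::ₘ (M + N)) := by
  obtain ⟨Γ, γ, rfl⟩ := exists_entries_eq M
  obtain ⟨Δ, δ, rfl⟩ := exists_entries_eq N
  exact ⟨_ :: (Γ ++ Δ), _, congrArg _ (entries_appObs Γ γ δ), .out x y
    (denotes_cons_entries.1 hP)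
    (denotes_cons_entries.1 hQ)⟩

theorem inp (h : Denotes P (ent y A a ::ₘ ent x B b ::ₘ M)) :
    Denotes (.inp x y P) (ent x (.parr A B) (a, b) ::ₘ M) := by
  obtain ⟨Γ, γ, rfl⟩ := exists_entries_eq M
  exact ⟨(x, .parr A B) :: Γ, ((a, b), γ), rfl, .inp x y
    (denotes_entries (Γ := (y, A) :: (x, B) :: Γ) (o := (a, b, γ)) |>.1 h)⟩

theorem selL (h : Denotes P (ent x A a ::ₘ M)) :
    Denotes (.sel x false P) (ent x (.oplus A B) (Sum.inl a) ::ₘ M) := by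
  obtain ⟨Γ, γ, rfl⟩ := exists_entries_eq M
  exact ⟨(x, .oplus A B) :: Γ, (Sum.inl a, γ), rfl, .selL x
    (denotes_cons_entries.1 h)⟩

theorem selR (h : Denotes P (ent x B b ::ₘ M)) :
    Denotes (.sel x true P) (ent x (.oplus A B) (Sum.inr b) ::ₘ M) := by
  obtain ⟨Γ, γ, rfl⟩ := exists_entries_eq M
  exact ⟨(x, .oplus A B) :: Γ, (Sum.inr b, γ), rfl, .selR x
    (denotes_cons_entries.1 h)⟩

theorem casL (hP : Denotes P (ent x A a ::ₘ M)) (hQ : HasType Q ((x, B) ::ₘ M.map typing)) :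
    Denotes (.cas x P Q) (ent x (.wth A B) (Sum.inl a) ::ₘ M) := by
  obtain ⟨Γ, γ, rfl⟩ := exists_entries_eq M
  rw [map_typing_entries, Multiset.cons_coe, hasType_coe] at hQ
  exact ⟨(x, .wth A B) :: Γ, (Sum.inl a, γ), rfl, .casL x
    (denotes_cons_entries.1 hP) hQ⟩

theorem casR (hP : HasType P ((x, A) ::ₘ M.map typing)) (hQ : Denotes Q (ent x B b ::ₘ M)) :
    Denotes (.cas x P Q) (ent x (.wth A B) (Sum.inr b) ::ₘ M) := by
  obtain ⟨Γ, γ, rfl⟩ := exists_entries_eq M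
  rw [map_typing_entries, Multiset.cons_coe, hasType_coe] at hP
  exact ⟨(x, .wth A B) :: Γ, (Sum.inr b, γ), rfl, .casR x hP
    (denotes_cons_entries.1 hQ)⟩

theorem par (hP : Denotes P M) (hQ : Denotes Q N) : Denotes (.par P Q) (M + N) := by
  obtain ⟨Γ, γ, rfl, hP⟩ := hP
  obtain ⟨Δ, δ, rfl, hQ⟩ := hQ
  exact ⟨_, _, entries_appObs _ _ _, .mix2 hP hQ⟩

theorem cut (hP : Denotes P (ent x A a ::ₘ M))
    (hQ : Denotes Q (ent x A.dual (dualObs A a) ::ₘ N)) : Denotes (.cut x P Q) (M + N) := by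
  obtain ⟨Γ, γ, rfl⟩ := exists_entries_eq M
  obtain ⟨Δ, δ, rfl⟩ := exists_entries_eq N
  exact ⟨_, _, entries_appObs _ _ _, .cut x a
    (denotes_cons_entries.1 hP)
    (denotes_cons_entries.1 hQ)⟩

theorem client (h : Denotes P (ent y A a ::ₘ M)) :
    Denotes (.client x y P) (ent x (.quest A) ({a} : Multiset (Obs A)) ::ₘ M) := by
  obtain ⟨Γ, γ, rfl⟩ := exists_entries_eq M
  exact ⟨(x, .quest A) :: Γ, _, rfl, .client x y (denotes_cons_entries.1 h)⟩

theorem server {ι : Type*} {Θ : List (Name × Form)} {runs : List ι} {f : ι → Obs A}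
    {θ : ι → ObsCtx (QCtx Θ)} (hP : HasType P ((y, A) ::ₘ ↑(QCtx Θ)))
    (h : ∀ i ∈ runs, Denotes P (ent y A (f i) ::ₘ entries (QCtx Θ) (θ i))) :
    Denotes (.server x y P) (ent x (.bang A) (↑(runs.map f) : Multiset (Obs A)) ::ₘ
      entries (QCtx Θ) (qSum Θ (runs.map θ))) := by
  have hruns : ∀ r ∈ runs.map fun i => (f i, θ i), Den P ((y, A) :: QCtx Θ) (r.1, r.2) := by
    intro r hr
    obtain ⟨i, hi, rfl⟩ := List.mem_map.1 hr
    exact denotes_cons_entries.1 (h i hi)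
  simpa only [List.map_map, Function.comp_def] using
    denotes_cons_entries.2 (Den.server x y _ (hasType_coe.1 hP) hruns)

end Denotes

end Rules

/-! ### Inversion in contexts without `?`-formulas -/

/-- `?`-formulas, the ones subject to weakening and contraction. -/
def IsQuest (A : Form) : Prop := ∃ B, A = .quest B

/-- Contexts without `?`-formulas. Neither weakening nor contraction can end a derivation over
such a context, so the last rule is dictated by the process. -/
def Linear (M : Multiset NamedObs) : Prop := ∀ e ∈ M, ¬ IsQuest e.2.1

/-- The name `x` is not used in `M`. -/
def Fresh (x : Name) (M : Multiset NamedObs) : Prop := ∀ e ∈ M, e.1 ≠ x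

section

variable {x y : ℕ} {A : Form} {a : Obs A} {M N : Multiset NamedObs}

@[simp] theorem linear_zero : Linear 0 := by simp [Linear]

@[simp] theorem linear_cons : Linear (ent x A a ::ₘ M) ↔ ¬ IsQuest A ∧ Linear M := by
  simp [Linear, ent]

@[simp] theorem linear_singleton : Linear {ent x A a} ↔ ¬ IsQuest A := by
  simp [Linear, ent]

@[simp] theorem linear_add : Linear (M + N) ↔ Linear M ∧ Linear N := by
  simp [Linear, or_imp, forall_and]

@[simp] theorem fresh_zero : Fresh x 0 := by simp [Fresh]

@[simp] theorem fresh_cons : Fresh x (ent y A a ::ₘ M) ↔ y ≠ x ∧ Fresh x M := by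
  simp [Fresh, ent]

@[simp] theorem fresh_singleton : Fresh x {ent y A a} ↔ y ≠ x := by
  simp [Fresh, ent]

@[simp] theorem fresh_add : Fresh x (M + N) ↔ Fresh x M ∧ Fresh x N := by
  simp [Fresh, or_imp, forall_and]

end

/-- What the last rule of a derivation of `Denotes P M` provides when `M` is linear. Forwarders
are never inverted this way, and clients have no linear context. -/
def Inverted : Proc → Multiset NamedObs → Prop
  | .nil, M => M = 0
  | .fwd _ _, _ => True
  | .close x, M => M = {ent x .one ()}
  | .wait x P, M => ∃ M', M = ent x .bot () ::ₘ M' ∧ Denotes P M'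
  | .out x y P Q, M => ∃ A B a b M₁ M₂, M = ent x (.tensor A B) (a, b) ::ₘ (M₁ + M₂) ∧
      Denotes P (ent y A a ::ₘ M₁) ∧ Denotes Q (ent x B b ::ₘ M₂)
  | .inp x y P, M => ∃ A B a b M', M = ent x (.parr A B) (a, b) ::ₘ M' ∧
      Denotes P (ent y A a ::ₘ ent x B b ::ₘ M')
  | .sel x false P, M => ∃ A B a M', M = ent x (.oplus A B) (Sum.inl a) ::ₘ M' ∧
      Denotes P (ent x A a ::ₘ M')
  | .sel x true P, M => ∃ A B b M', M = ent x (.oplus A B) (Sum.inr b) ::ₘ M' ∧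
      Denotes P (ent x B b ::ₘ M')
  | .cas x P Q, M => ∃ A B M',
      (∃ a, M = ent x (.wth A B) (Sum.inl a) ::ₘ M' ∧ Denotes P (ent x A a ::ₘ M')) ∨
      (∃ b, M = ent x (.wth A B) (Sum.inr b) ::ₘ M' ∧ Denotes Q (ent x B b ::ₘ M'))
  | .par P Q, M => ∃ M₁ M₂, M = M₁ + M₂ ∧ Denotes P M₁ ∧ Denotes Q M₂
  | .cut x P Q, M => ∃ (A : Form) (a : Obs A) (M₁ M₂ : Multiset NamedObs), M = M₁ + M₂ ∧
      Denotes P (ent x A a ::ₘ M₁) ∧ Denotes Q (ent x A.dual (dualObs A a) ::ₘ M₂)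
  | .server x y P, M => ∃ (A : Form) (m : Multiset (Obs A)), M = {ent x (.bang A) m} ∧
      ∀ r ∈ m, Denotes P {ent y A r}
  | .client _ _ _, _ => True

theorem Den.inverted {P : Proc} {Γ : Ctx} {o : ObsCtx Γ} (h : Den P Γ o) :
    Linear (entries Γ o) → Inverted P (entries Γ o) := by
  induction h with
  | fwd => exact fun _ => trivial
  | close x => exact fun _ => rfl
  | nil => exact fun _ => rfl
  | wait x h => exact fun _ => ⟨_, rfl, denotes_entries.2 h⟩
  | out x y hP hQ =>
    exact fun _ => ⟨_, _, _, _, _, _, congrArg _ (entries_appObs _ _ _),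
      denotes_cons_entries.2 hP, denotes_cons_entries.2 hQ⟩
  | inp x y h => exact fun _ => ⟨_, _, _, _, _, rfl, denotes_cons_entries.2 h⟩
  | selL x h => exact fun _ => ⟨_, _, _, _, rfl, denotes_cons_entries.2 h⟩
  | selR x h => exact fun _ => ⟨_, _, _, _, rfl, denotes_cons_entries.2 h⟩
  | casL x h => exact fun _ => ⟨_, _, _, .inl ⟨_, rfl, denotes_cons_entries.2 h⟩⟩
  | casR x _ h => exact fun _ => ⟨_, _, _, .inr ⟨_, rfl, denotes_cons_entries.2 h⟩⟩
  | @server x y P A Θ runs _ hruns =>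
    cases Θ with
    | nil =>
      refine fun _ => ⟨A, _, rfl, fun r hr => ?_⟩
      obtain ⟨run, hrun, rfl⟩ := List.mem_map.1 (Multiset.mem_coe.1 hr)
      exact denotes_cons_entries.2 (hruns run hrun)
    | cons p Θ => exact fun hM => absurd ⟨_, rfl⟩ (linear_cons.1 (linear_cons.1 hM).2).1
  | client => exact fun _ => trivial
  | weaken x A => exact fun hM => absurd ⟨_, rfl⟩ (linear_cons.1 hM).1
  | contract x₁ x₂ A => exact fun hM => absurd ⟨_, rfl⟩ (linear_cons.1 hM).1
  | cut x a hP hQ =>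
    exact fun _ => ⟨_, a, _, _, entries_appObs _ _ _,
      denotes_cons_entries.2 hP, denotes_cons_entries.2 hQ⟩
  | mix2 hP hQ =>
    exact fun _ => ⟨_, _, entries_appObs _ _ _, denotes_entries.2 hP, denotes_entries.2 hQ⟩
  | exch _ hperm ih => exact hperm.entries_eq ▸ ih

theorem Denotes.inverted {P : Proc} {M : Multiset NamedObs} (h : Denotes P M) (hM : Linear M) :
    Inverted P M := by
  obtain ⟨Γ, o, rfl, h⟩ := h
  exact h.inverted hM

theorem eq_of_cons_eq_cons_of_fresh {x : Name} {s t : TypedObs} {M N : Multiset NamedObs}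
    (hx : Fresh x N) (h : (x, s) ::ₘ N = (x, t) ::ₘ M) : s = t ∧ N = M := by
  obtain ⟨hst, rfl⟩ | ⟨_, M', rfl, _⟩ := Multiset.cons_eq_cons.1 h
  · exact ⟨(Prod.mk.inj hst).2, rfl⟩
  · exact absurd rfl (hx _ (Multiset.mem_cons_self _ _))

section NamedInversion

variable {x y : Name} {P Q : Proc} {A B : Form} {M : Multiset NamedObs}

theorem denotes_nil_iff (hM : Linear M) : Denotes .nil M ↔ M = 0 :=
  ⟨fun h => h.inverted hM, fun h => h ▸ .nil⟩

theorem denotes_inp_iff {p : Obs A × Obs B} (hx : Fresh x M) (hM : Linear M) :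
    Denotes (.inp x y P) (ent x (.parr A B) p ::ₘ M) ↔
      Denotes P (ent y A p.1 ::ₘ ent x B p.2 ::ₘ M) := by
  refine ⟨fun h => ?_, .inp⟩
  obtain ⟨A', B', a, b, M', hM', hP⟩ := h.inverted (by simp [IsQuest, hM])
  obtain ⟨⟨⟩, rfl⟩ := eq_of_cons_eq_cons_of_fresh hx hM'
  exact hP

theorem denotes_close_par_iff {u : Unit} (hx : Fresh x M) (hM : Linear M) :
    Denotes (.par (.close x) P) (ent x .one u ::ₘ M) ↔ Denotes P M := by
  refine ⟨fun h => ?_, .par .close⟩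
  obtain ⟨M₁, M₂, hM', hclose, hP⟩ := h.inverted (by simp [IsQuest, hM])
  have lin : Linear (M₁ + M₂) := hM' ▸ (by simp [IsQuest, hM])
  obtain rfl : M₁ = {ent x .one ()} := hclose.inverted (linear_add.1 lin).1
  obtain ⟨_, rfl⟩ := eq_of_cons_eq_cons_of_fresh hx hM'
  exact hP

theorem denotes_wait_iff {u : Unit} (hx : Fresh x M) (hM : Linear M) :
    Denotes (.wait x P) (ent x .bot u ::ₘ M) ↔ Denotes P M := by
  refine ⟨fun h => ?_, .wait⟩
  obtain ⟨M', hM', hP⟩ := h.inverted (by simp [IsQuest, hM])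
  obtain ⟨_, rfl⟩ := eq_of_cons_eq_cons_of_fresh hx hM'
  exact hP

theorem denotes_selL_iff {p : Obs A ⊕ Obs B} (hx : Fresh x M) (hM : Linear M) :
    Denotes (.sel x false P) (ent x (.oplus A B) p ::ₘ M) ↔
      ∃ a, Sum.inl a = p ∧ Denotes P (ent x A a ::ₘ M) := by
  refine ⟨fun h => ?_, fun ⟨_, h, hP⟩ => h ▸ .selL hP⟩
  obtain ⟨A', B', a, M', hM', hP⟩ := h.inverted (by simp [IsQuest, hM])
  obtain ⟨⟨⟩, rfl⟩ := eq_of_cons_eq_cons_of_fresh hx hM'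
  exact ⟨a, rfl, hP⟩

theorem denotes_selR_iff {p : Obs A ⊕ Obs B} (hx : Fresh x M) (hM : Linear M) :
    Denotes (.sel x true P) (ent x (.oplus A B) p ::ₘ M) ↔
      ∃ b, Sum.inr b = p ∧ Denotes P (ent x B b ::ₘ M) := by
  refine ⟨fun h => ?_, fun ⟨_, h, hP⟩ => h ▸ .selR hP⟩
  obtain ⟨A', B', b, M', hM', hP⟩ := h.inverted (by simp [IsQuest, hM])
  obtain ⟨⟨⟩, rfl⟩ := eq_of_cons_eq_cons_of_fresh hx hM'
  exact ⟨b, rfl, hP⟩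

theorem denotes_cas_iff {p : Obs A ⊕ Obs B} (hx : Fresh x M) (hM : Linear M)
    (hP : HasType P ((x, A) ::ₘ M.map typing)) (hQ : HasType Q ((x, B) ::ₘ M.map typing)) :
    Denotes (.cas x P Q) (ent x (.wth A B) p ::ₘ M) ↔
      (∃ a, Sum.inl a = p ∧ Denotes P (ent x A a ::ₘ M)) ∨
      (∃ b, Sum.inr b = p ∧ Denotes Q (ent x B b ::ₘ M)) := by
  constructor
  · intro h
    obtain ⟨A', B', M', ⟨a, hM', h⟩ | ⟨b, hM', h⟩⟩ := h.inverted (by simp [IsQuest, hM]) <;>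
      obtain ⟨⟨⟩, rfl⟩ := eq_of_cons_eq_cons_of_fresh hx hM'
    · exact .inl ⟨a, rfl, h⟩
    · exact .inr ⟨b, rfl, h⟩
  · rintro (⟨a, rfl, h⟩ | ⟨b, rfl, h⟩)
    · exact .casL h hQ
    · exact .casR hP h

theorem denotes_out_iff {p : Obs A × Obs B} (hx : Fresh x M) (hM : Linear M) :
    Denotes (.out x y P Q) (ent x (.tensor A B) p ::ₘ M) ↔
      ∃ M₁ M₂, M₁ + M₂ = M ∧ Denotes P (ent y A p.1 ::ₘ M₁) ∧ Denotes Q (ent x B p.2 ::ₘ M₂) := by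
  refine ⟨fun h => ?_, fun ⟨_, _, h, hP, hQ⟩ => h ▸ .out hP hQ⟩
  obtain ⟨A', B', a, b, M₁, M₂, hM', hP, hQ⟩ := h.inverted (by simp [IsQuest, hM])
  obtain ⟨⟨⟩, rfl⟩ := eq_of_cons_eq_cons_of_fresh hx hM'
  exact ⟨M₁, M₂, rfl, hP, hQ⟩

end NamedInversion

/-- Sends `r` along `q`, continues with `S` and closes what remains of `q`: this turns an endpoint
`r : P` of `S` into an endpoint `q : P ⊗ ⊥`. -/
def Proc.outWait (q r : Name) (S : Proc) : Proc := .out q r S (.wait q .nil)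

theorem HasType.outWait {q r : Name} {S : Proc} {P : Form} {M : Multiset (Name × Form)}
    (h : HasType S ((r, P) ::ₘ M)) : HasType (.outWait q r S) ((q, .tensor P .bot) ::ₘ M) := by
  simpa [Proc.outWait] using HasType.out (x := q) h (.wait .nil)

theorem HasType.close_par {x : Name} {P : Proc} {M : Multiset (Name × Form)} (h : HasType P M) :
    HasType (.par (.close x) P) ((x, .one) ::ₘ M) := .par .close h

theorem Denotes.outWait {q r : Name} {S : Proc} {P : Form} {p : Obs P × Unit}
    {M : Multiset NamedObs} (h : Denotes S (ent r P p.1 ::ₘ M)) :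
    Denotes (.outWait q r S) (ent q (.tensor P .bot) p ::ₘ M) := by
  simpa [Proc.outWait] using Denotes.out (x := q) h (.wait .nil)

theorem Denotes.close_par {x : Name} {P : Proc} {u : Unit} {M : Multiset NamedObs}
    (h : Denotes P M) : Denotes (.par (.close x) P) (ent x .one u ::ₘ M) := .par .close h

theorem Denotes.exists_mem_outWait {q r : Name} {S : Proc} {M : Multiset NamedObs}
    (h : Denotes (.outWait q r S) M) (hM : Linear M) : ∃ e ∈ M, e.1 = q := by
  obtain ⟨_, _, _, _, _, _, rfl, _⟩ := h.inverted hM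
  exact ⟨_, Multiset.mem_cons_self _ _, rfl⟩

theorem denotes_outWait_iff {q r : Name} {S : Proc} {P : Form} {p : Obs P × Unit}
    {M : Multiset NamedObs} (hq : Fresh q M) (hM : Linear M) :
    Denotes (.outWait q r S) (ent q (.tensor P .bot) p ::ₘ M) ↔ Denotes S (ent r P p.1 ::ₘ M) := by
  refine ⟨fun h => ?_, Denotes.outWait⟩
  obtain ⟨M₁, M₂, rfl, hS, hwait⟩ := (denotes_out_iff hq hM).1 h
  rw [linear_add] at hM
  rw [denotes_wait_iff (fresh_add.1 hq).2 hM.2, denotes_nil_iff hM.2] at hwait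
  simpa [hwait] using hS

section OutWaitPair

variable {y y' q q' r r' : ℕ} {S S' : Proc} {P P' W W' : Form}

theorem HasType.out_outWait (h' : HasType S' {(r', P'), (y', W')})
    (h : HasType S {(r, P), (y, W)}) :
    HasType (.out y y' (.outWait q' r' S') (.outWait q r S))
      {(q', .tensor P' .bot), (q, .tensor P .bot), (y, .tensor W' W)} := by
  have hS' := h'.outWait (q := q')
  have hS := h.outWait (q := q)
  rw [cons_singleton_comm] at hS hS'
  rw [Multiset.insert_eq_cons, Multiset.insert_eq_cons, cons_cons_singleton_rotate]
  exact hS'.out hS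

theorem denotes_out_outWait_iff {w : Obs W' × Obs W} {p' : Obs P' × Unit} {p : Obs P × Unit}
    (hW : ¬ IsQuest W) (hW' : ¬ IsQuest W')
    (hyq : y ≠ q) (hyq' : y ≠ q') (hy'q' : y' ≠ q') (hqq' : q ≠ q') :
    Denotes (.out y y' (.outWait q' r' S') (.outWait q r S))
      {ent q' (.tensor P' .bot) p', ent q (.tensor P .bot) p, ent y (.tensor W' W) w} ↔
    Denotes S' {ent r' P' p'.1, ent y' W' w.1} ∧ Denotes S {ent r P p.1, ent y W w.2} := by
  have hS' : Denotes (.outWait q' r' S') {ent y' W' w.1, ent q' (.tensor P' .bot) p'} ↔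
      Denotes S' {ent r' P' p'.1, ent y' W' w.1} := by
    rw [Multiset.pair_comm]
    exact denotes_outWait_iff (by simpa) (by simpa)
  have hS : Denotes (.outWait q r S) {ent y W w.2, ent q (.tensor P .bot) p} ↔
      Denotes S {ent r P p.1, ent y W w.2} := by
    rw [Multiset.pair_comm]
    exact denotes_outWait_iff (by simpa) (by simpa)
  rw [Multiset.insert_eq_cons, Multiset.insert_eq_cons, cons_cons_singleton_rotate,
    denotes_out_iff (by simp [hyq.symm, hyq'.symm]) (by simp [IsQuest]), ← hS, ← hS']
  constructor
  · rintro ⟨M', M, hM, h', h⟩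
    have lin : Linear (M' + M) := hM ▸ by simp [IsQuest]
    have mem_q' := h'.exists_mem_outWait (by simp [hW', (linear_add.1 lin).1])
    have mem_q := h.exists_mem_outWait (by simp [hW, (linear_add.1 lin).2])
    obtain ⟨rfl, rfl⟩ | ⟨rfl, rfl⟩ | ⟨rfl, rfl⟩ | ⟨rfl, rfl⟩ := add_eq_pair_iff.1 hM
    · exact ⟨h', h⟩
    all_goals simp [ent, hyq, hy'q', hqq'] at mem_q mem_q'
  · exact fun ⟨h', h⟩ => ⟨{_}, {_}, rfl, h', h⟩

theorem HasType.selL_outWait (h : HasType S {(r, P), (y, W)}) :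
    HasType (.sel y false (.outWait q r S)) {(q, .tensor P .bot), (y, .oplus W W')} := by
  rw [Multiset.pair_comm]
  exact .selL (cons_singleton_comm (y, W) _ ▸ h.outWait)

theorem HasType.selR_outWait (h : HasType S {(r, P), (y, W)}) :
    HasType (.sel y true (.outWait q r S)) {(q, .tensor P .bot), (y, .oplus W' W)} := by
  rw [Multiset.pair_comm]
  exact .selR (cons_singleton_comm (y, W) _ ▸ h.outWait)

theorem denotes_selL_outWait_iff {p : Obs P × Unit} {w : Obs W ⊕ Obs W'} (hW : ¬ IsQuest W)
    (hyq : y ≠ q) :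
    Denotes (.sel y false (.outWait q r S)) {ent q (.tensor P .bot) p, ent y (.oplus W W') w} ↔
      ∃ b, Sum.inl b = w ∧ Denotes S {ent r P p.1, ent y W b} := by
  rw [Multiset.pair_comm, Multiset.insert_eq_cons,
    denotes_selL_iff (by simpa using hyq.symm) (by simp [IsQuest])]
  refine exists_congr fun b => and_congr_right fun _ => ?_
  rw [cons_singleton_comm]
  exact denotes_outWait_iff (by simpa) (by simpa)

theorem denotes_selR_outWait_iff {p : Obs P × Unit} {w : Obs W' ⊕ Obs W} (hW : ¬ IsQuest W)
    (hyq : y ≠ q) :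
    Denotes (.sel y true (.outWait q r S)) {ent q (.tensor P .bot) p, ent y (.oplus W' W) w} ↔
      ∃ b, Sum.inr b = w ∧ Denotes S {ent r P p.1, ent y W b} := by
  rw [Multiset.pair_comm, Multiset.insert_eq_cons,
    denotes_selR_iff (by simpa using hyq.symm) (by simp [IsQuest])]
  refine exists_congr fun b => and_congr_right fun _ => ?_
  rw [cons_singleton_comm]
  exact denotes_outWait_iff (by simpa) (by simpa)

end OutWaitPair

/-! ### Realizing relations between two endpoints -/

/-- The relation `{(f i, g i) | i : ι}` between `⟦P⟧` and `⟦W⟧` is the denotation of a process with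
two endpoints `P` and `W`, whose names can be chosen freely. -/
def Realizable {ι : Type*} (P W : Form) (f : ι → Obs P) (g : ι → Obs W) : Prop :=
  ∀ x y : ℕ, x ≠ y → ∃ S, HasType S {(x, P), (y, W)} ∧
    ∀ p w, Denotes S {ent x P p, ent y W w} ↔ ∃ i, f i = p ∧ g i = w

namespace Realizable

variable {ι ι₁ ι₂ : Type*} {P P₁ P₂ W W₁ W₂ : Form} {f : ι → Obs P} {g : ι → Obs W}
  {f₁ : ι₁ → Obs P₁} {f₂ : ι₂ → Obs P₂} {g₁ : ι₁ → Obs W₁} {g₂ : ι₂ → Obs W₂}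

theorem symm (h : Realizable P W f g) : Realizable W P g f := by
  intro x y hxy
  obtain ⟨S, hS, hden⟩ := h y x hxy.symm
  refine ⟨S, Multiset.pair_comm (y, P) (x, W) ▸ hS, fun w p => ?_⟩
  rw [Multiset.pair_comm, hden]
  exact exists_congr fun _ => and_comm

theorem one : Realizable (.parr .bot .one) .one (fun _ : Unit => ((), ())) (fun _ => ()) := by
  intro x y _
  refine ⟨.inp x (x + y + 1) (.par (.close x) (.wait (x + y + 1) (.close y))), ?_, fun p w => ?_⟩
  · refine .inp ?_
    rw [Multiset.cons_swap]
    exact .close_par (.wait .close)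
  · refine iff_of_true (.inp (A := .bot) (B := .one) (a := ()) (b := ()) ?_) ⟨(), rfl, rfl⟩
    rw [Multiset.cons_swap]
    exact .close_par (.wait .close)

theorem tensor (h₁ : Realizable P₁ W₁ f₁ g₁) (h₂ : Realizable P₂ W₂ f₂ g₂)
    (hW₁ : ¬ IsQuest W₁) (hW₂ : ¬ IsQuest W₂) :
    Realizable (.parr (.parr (.tensor P₁ .bot) (.tensor P₂ .bot)) .one) (.tensor W₁ W₂)
      (fun i : ι₁ × ι₂ => (((f₁ i.1, ()), (f₂ i.2, ())), ())) (fun i => (g₁ i.1, g₂ i.2)) := by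
  intro x y hxy
  obtain ⟨S₁, hS₁, hden₁⟩ := h₁ (x + y + 4) (x + y + 3) (by omega)
  obtain ⟨S₂, hS₂, hden₂⟩ := h₂ (x + y + 4) y (by omega)
  refine ⟨.inp x (x + y + 1) (.par (.close x) (.inp (x + y + 1) (x + y + 2)
    (.out y (x + y + 3) (.outWait (x + y + 2) (x + y + 4) S₁)
      (.outWait (x + y + 1) (x + y + 4) S₂)))), ?_, fun p w => ?_⟩
  · refine .inp ?_
    rw [Multiset.cons_swap]
    exact .close_par (.inp (.out_outWait hS₁ hS₂))
  · rw [Multiset.insert_eq_cons, denotes_inp_iff (by simp; omega) (by simp [IsQuest]),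
      Multiset.cons_swap, denotes_close_par_iff (by simp; omega) (by simp [IsQuest]),
      denotes_inp_iff (by simp; omega) (by simp [IsQuest]), ← Multiset.insert_eq_cons,
      ← Multiset.insert_eq_cons, denotes_out_outWait_iff hW₂ hW₁ (by omega) (by omega) (by omega)
      (by omega), hden₁, hden₂]
    aesop

theorem oplus (h₁ : Realizable P₁ W₁ f₁ g₁) (h₂ : Realizable P₂ W₂ f₂ g₂)
    (hW₁ : ¬ IsQuest W₁) (hW₂ : ¬ IsQuest W₂) :
    Realizable (.parr (.wth (.tensor P₁ .bot) (.tensor P₂ .bot)) .one) (.oplus W₁ W₂)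
      (fun i : ι₁ ⊕ ι₂ => (i.map (fun i => (f₁ i, ())) (fun i => (f₂ i, ())), ()))
      (fun i => i.map g₁ g₂) := by
  intro x y hxy
  obtain ⟨S₁, hS₁, hden₁⟩ := h₁ (x + y + 2) y (by omega)
  obtain ⟨S₂, hS₂, hden₂⟩ := h₂ (x + y + 2) y (by omega)
  refine ⟨.inp x (x + y + 1) (.par (.close x) (.cas (x + y + 1)
    (.sel y false (.outWait (x + y + 1) (x + y + 2) S₁))
    (.sel y true (.outWait (x + y + 1) (x + y + 2) S₂)))), ?_, fun p w => ?_⟩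
  · refine .inp ?_
    rw [Multiset.cons_swap]
    exact .close_par (.cas hS₁.selL_outWait hS₂.selR_outWait)
  · rw [Multiset.insert_eq_cons, denotes_inp_iff (by simp; omega) (by simp [IsQuest]),
      Multiset.cons_swap, denotes_close_par_iff (by simp; omega) (by simp [IsQuest]),
      denotes_cas_iff (by simp; omega) (by simp [IsQuest]) hS₁.selL_outWait hS₂.selR_outWait]
    simp only [← Multiset.insert_eq_cons,
      denotes_selL_outWait_iff hW₁ (show y ≠ x + y + 1 by omega),
      denotes_selR_outWait_iff hW₂ (show y ≠ x + y + 1 by omega), hden₁, hden₂]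
    aesop

end Realizable

/-! ### Duality of typed observations -/

namespace TypedObs

/-- The tensor of two typed observations. -/
def tensor (s t : TypedObs) : TypedObs := ⟨.tensor s.1 t.1, (s.2, t.2)⟩

/-- The par of two typed observations. -/
def parr (s t : TypedObs) : TypedObs := ⟨.parr s.1 t.1, (s.2, t.2)⟩

/-- A single query: the observation of `?A` consisting of one observation of `A`. -/
def query (s : TypedObs) : TypedObs := ⟨.quest s.1, ({s.2} : Multiset (Obs s.1))⟩

/-- The same observation seen from the other side. -/
def dual (s : TypedObs) : TypedObs := ⟨s.1.dual, dualObs s.1 s.2⟩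

end TypedObs

theorem Form.dual_dual (A : Form) : A.dual.dual = A := by
  induction A <;> simp_all [Form.dual]

theorem Form.sizeOf_dual (A : Form) : sizeOf A.dual = sizeOf A := by
  induction A <;> simp_all [Form.dual]

theorem Form.tensor_ne_dual_left (A B : Form) : A.tensor B ≠ A.dual := fun h => by
  have := congrArg sizeOf h
  simp only [Form.tensor.sizeOf_spec, Form.sizeOf_dual] at this
  omega

theorem Form.tensor_ne_dual_right (A B : Form) : A.tensor B ≠ B.dual := fun h => by
  have := congrArg sizeOf h
  simp only [Form.tensor.sizeOf_spec, Form.sizeOf_dual] at this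
  omega

/-- `⊗`-formulas. -/
def IsTensor (A : Form) : Prop := ∃ B C, A = .tensor B C

/-- `⅋`-formulas. -/
def IsParr (A : Form) : Prop := ∃ B C, A = .parr B C

theorem IsTensor.not_isQuest {A : Form} (h : IsTensor A) : ¬ IsQuest A := by
  obtain ⟨B, C, rfl⟩ := h
  rintro ⟨_, ⟨⟩⟩

theorem IsTensor.not_isQuest_dual {A : Form} (h : IsTensor A) : ¬ IsQuest A.dual := by
  obtain ⟨B, C, rfl⟩ := h
  rintro ⟨_, ⟨⟩⟩

theorem IsTensor.isParr_dual {A : Form} (h : IsTensor A) : IsParr A.dual := by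
  obtain ⟨B, C, rfl⟩ := h
  exact ⟨_, _, rfl⟩

theorem IsParr.isTensor_dual {A : Form} (h : IsParr A) : IsTensor A.dual := by
  obtain ⟨B, C, rfl⟩ := h
  exact ⟨_, _, rfl⟩

theorem IsParr.not_isQuest {A : Form} (h : IsParr A) : ¬ IsQuest A := by
  obtain ⟨B, C, rfl⟩ := h
  rintro ⟨_, ⟨⟩⟩

theorem IsParr.not_isTensor {A : Form} (h : IsParr A) : ¬ IsTensor A := by
  obtain ⟨B, C, rfl⟩ := h
  rintro ⟨_, _, ⟨⟩⟩

theorem sigma_mk_eq_of_map_mk_eq {A B : Form} {m : Multiset (Obs A)} {n : Multiset (Obs B)}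
    (hAB : A = B) (h : m.map (Sigma.mk (β := Obs) A) = n.map (Sigma.mk B)) :
    (⟨A, m⟩ : (A : Form) × Multiset (Obs A)) = ⟨B, n⟩ := by
  subst hAB
  rw [Multiset.map_injective sigma_mk_injective h]

theorem TypedObs.dual_dual (s : TypedObs) : s.dual.dual = s := by
  obtain ⟨A, a⟩ := s
  induction A with
  | one | bot => rfl
  | tensor A B ihA ihB => exact congrArg₂ TypedObs.tensor (ihA a.1) (ihB a.2)
  | parr A B ihA ihB => exact congrArg₂ TypedObs.parr (ihA a.1) (ihB a.2)
  | oplus A B ihA ihB =>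
    rcases a with a | b
    · exact congrArg₂ (fun (s : TypedObs) B => (⟨.oplus s.1 B, .inl s.2⟩ : TypedObs)) (ihA a)
        B.dual_dual
    · exact congrArg₂ (fun (s : TypedObs) A => (⟨.oplus A s.1, .inr s.2⟩ : TypedObs)) (ihB b)
        A.dual_dual
  | wth A B ihA ihB =>
    rcases a with a | b
    · exact congrArg₂ (fun (s : TypedObs) B => (⟨.wth s.1 B, .inl s.2⟩ : TypedObs)) (ihA a)
        B.dual_dual
    · exact congrArg₂ (fun (s : TypedObs) A => (⟨.wth A s.1, .inr s.2⟩ : TypedObs)) (ihB b)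
        A.dual_dual
  | bang A ih | quest A ih =>
    have map_eq : (((a.map (dualObs A)).map (dualObs A.dual)).map (Sigma.mk A.dual.dual)) =
        a.map (Sigma.mk (β := Obs) A) := by
      simp only [Multiset.map_map]
      exact Multiset.map_congr rfl fun a _ => ih a
    have pair_eq := sigma_mk_eq_of_map_mk_eq A.dual_dual map_eq
    first
    | exact congrArg (fun p : (A : Form) × Multiset (Obs A) => (⟨.bang p.1, p.2⟩ : TypedObs))
        pair_eq
    | exact congrArg (fun p : (A : Form) × Multiset (Obs A) => (⟨.quest p.1, p.2⟩ : TypedObs))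
        pair_eq

theorem TypedObs.tensor_inj : {a b a' b' : TypedObs} → a.tensor b = a'.tensor b' → a = a' ∧ b = b'
  | ⟨_, _⟩, ⟨_, _⟩, ⟨_, _⟩, ⟨_, _⟩, rfl => ⟨rfl, rfl⟩

theorem TypedObs.parr_inj : {a b a' b' : TypedObs} → a.parr b = a'.parr b' → a = a' ∧ b = b'
  | ⟨_, _⟩, ⟨_, _⟩, ⟨_, _⟩, ⟨_, _⟩, rfl => ⟨rfl, rfl⟩

theorem TypedObs.query_injective : Function.Injective TypedObs.query := by
  rintro ⟨A, a⟩ ⟨B, b⟩ h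
  obtain rfl : A = B := Form.quest.inj (congrArg Sigma.fst h)
  exact congrArg _ (Multiset.singleton_inj.1 (eq_of_heq (Sigma.mk.inj h).2))

theorem TypedObs.query_mk_injective (A : Form) :
    Function.Injective fun a : Obs A => query ⟨A, a⟩ :=
  query_injective.comp sigma_mk_injective

theorem TypedObs.dual_injective : Function.Injective TypedObs.dual :=
  Function.LeftInverse.injective TypedObs.dual_dual

/-! ### A name-free over-approximation of the semantics -/

/-- Splits an observation of a `?`-formula into its queries, which makes weakening and contraction
invisible, and leaves other observations whole. -/
def atoms : TypedObs → Multiset TypedObs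
  | ⟨.quest A, m⟩ => m.map fun a => TypedObs.query ⟨A, a⟩
  | s => {s}

theorem atoms_of_not_isQuest {s : TypedObs} (h : ¬ IsQuest s.1) : atoms s = {s} := by
  obtain ⟨A, a⟩ := s
  cases A with
  | quest A => exact absurd ⟨A, rfl⟩ h
  | _ => rfl

theorem isQuest_of_mem_atoms_quest {A : Form} {m : Multiset (Obs A)} :
    ∀ s ∈ atoms ⟨.quest A, m⟩, IsQuest s.1 := by
  intro s hs
  obtain ⟨a, _, rfl⟩ := Multiset.mem_map.1 hs
  exact ⟨A, rfl⟩

theorem atoms_eq_singleton_or (s : TypedObs) : atoms s = {s} ∨ ∀ t ∈ atoms s, IsQuest t.1 := by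
  by_cases h : IsQuest s.1
  · obtain ⟨A, a⟩ := s
    obtain ⟨B, rfl⟩ := h
    exact .inr isQuest_of_mem_atoms_quest
  · exact .inl (atoms_of_not_isQuest h)

theorem eq_of_mem_atoms {s t : TypedObs} (ht : ¬ IsQuest t.1) (h : t ∈ atoms s) : s = t := by
  obtain hs | hs := atoms_eq_singleton_or s
  · exact (Multiset.mem_singleton.1 (hs ▸ h)).symm
  · exact absurd (hs t h) ht

theorem eq_quest_zero_of_atoms_eq_zero {s : TypedObs} (h : atoms s = 0) :
    ∃ C, s = ⟨.quest C, (0 : Multiset (Obs C))⟩ := by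
  by_cases hs : IsQuest s.1
  · obtain ⟨A, a⟩ := s
    obtain ⟨C, rfl⟩ := hs
    exact ⟨C, congrArg _ (Multiset.map_eq_zero.1 h)⟩
  · simp [atoms_of_not_isQuest hs] at h

/-- The atoms of an observation of a context, without their names. -/
def forgetNames (M : Multiset NamedObs) : Multiset TypedObs := M.bind fun e => atoms e.2

section

variable {x : Name} {A : Form} {a : Obs A} {M N : Multiset NamedObs}

@[simp] theorem forgetNames_cons :
    forgetNames (ent x A a ::ₘ M) = atoms ⟨A, a⟩ + forgetNames M :=
  Multiset.cons_bind _ _ _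

@[simp] theorem forgetNames_singleton : forgetNames {ent x A a} = atoms ⟨A, a⟩ :=
  Multiset.singleton_bind _ _

@[simp] theorem forgetNames_add : forgetNames (M + N) = forgetNames M + forgetNames N :=
  Multiset.add_bind _ _ _

end

theorem mem_forgetNames {e : NamedObs} {M : Multiset NamedObs} (he : e ∈ M)
    (hq : ¬ IsQuest e.2.1) : e.2 ∈ forgetNames M :=
  Multiset.mem_bind.2 ⟨e, he, by simp [atoms_of_not_isQuest hq]⟩

/-- The semantics with names forgotten. It keeps track of formulas and observations only, and
nothing at all of selections, choices and cuts, but unlike the semantics itself it can be inverted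
in the presence of `?`-formulas. -/
def NameFree : Proc → Multiset TypedObs → Prop
  | .nil, t => t = 0
  | .fwd _ _, t => ∃ s, t = atoms s + atoms s.dual
  | .close _, t => t = {⟨.one, ()⟩}
  | .wait _ P, t => ∃ u, t = ⟨.bot, ()⟩ ::ₘ u ∧ NameFree P u
  | .out _ _ P Q, t => ∃ r s u v, t = r.tensor s ::ₘ (u + v) ∧
      NameFree P (atoms r + u) ∧ NameFree Q (atoms s + v)
  | .inp _ _ P, t => ∃ r s u, t = r.parr s ::ₘ u ∧ NameFree P (atoms r + (atoms s + u))
  | .par P Q, t => ∃ u v, t = u + v ∧ NameFree P u ∧ NameFree Q v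
  | .server _ _ P, t => ∃ (A : Form) (runs : Multiset (Obs A × Multiset TypedObs)),
      t = ⟨.bang A, runs.map Prod.fst⟩ ::ₘ (runs.map Prod.snd).sum ∧
      ∀ r ∈ runs, (∀ s ∈ r.2, IsQuest s.1) ∧ NameFree P (atoms ⟨A, r.1⟩ + r.2)
  | .client _ _ P, t => ∃ s u, t = s.query ::ₘ u ∧ NameFree P (atoms s + u)
  | .sel _ _ _, _ => True
  | .cas _ _ _, _ => True
  | .cut _ _ _, _ => True

theorem nameFree_rename (x y : Name) (P : Proc) : NameFree (P.rename x y) = NameFree P := by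
  induction P <;> funext t <;> simp_all [NameFree, Proc.rename]

theorem isQuest_of_mem_forgetNames_entries_qCtx : (Θ : List (Name × Form)) →
    (o : ObsCtx (QCtx Θ)) → ∀ s ∈ forgetNames (entries (QCtx Θ) o), IsQuest s.1
  | [], _, _, h => absurd h (Multiset.notMem_zero _)
  | p :: Θ, o, s, h => by
    obtain h | h := Multiset.mem_add.1 <|
      (forgetNames_cons (x := p.1) (A := .quest p.2) (a := o.1)) ▸ h
    · exact isQuest_of_mem_atoms_quest s h
    · exact isQuest_of_mem_forgetNames_entries_qCtx Θ o.2 s h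

theorem forgetNames_entries_qZero : (Θ : List (Name × Form)) →
    forgetNames (entries (QCtx Θ) (qZero Θ)) = 0
  | [] => rfl
  | p :: Θ => by
    refine (forgetNames_cons (x := p.1) (A := .quest p.2)).trans ?_
    exact (zero_add _).trans (forgetNames_entries_qZero Θ)

theorem forgetNames_entries_qAdd : (Θ : List (Name × Form)) → (o o' : ObsCtx (QCtx Θ)) →
    forgetNames (entries (QCtx Θ) (qAdd Θ o o')) =
      forgetNames (entries (QCtx Θ) o) + forgetNames (entries (QCtx Θ) o')
  | [], _, _ => rfl
  | p :: Θ, o, o' => by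
    have split (o : ObsCtx (QCtx (p :: Θ))) : forgetNames (entries (QCtx (p :: Θ)) o) =
        atoms ⟨.quest p.2, o.1⟩ + forgetNames (entries (QCtx Θ) o.2) := forgetNames_cons
    have head_eq : atoms ⟨.quest p.2, (qAdd (p :: Θ) o o').1⟩ =
        atoms ⟨.quest p.2, o.1⟩ + atoms ⟨.quest p.2, o'.1⟩ := Multiset.map_add _ _ _
    rw [split, split, split, head_eq, add_add_add_comm]
    exact congrArg _ (forgetNames_entries_qAdd Θ o.2 o'.2)

theorem forgetNames_entries_qSum (Θ : List (Name × Form)) (l : List (ObsCtx (QCtx Θ))) :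
    forgetNames (entries (QCtx Θ) (qSum Θ l)) =
      (l.map fun o => forgetNames (entries (QCtx Θ) o)).sum := by
  induction l with
  | nil => exact forgetNames_entries_qZero Θ
  | cons o l ih =>
    exact (forgetNames_entries_qAdd Θ o (qSum Θ l)).trans (congrArg _ ih)

theorem Den.nameFree {P : Proc} {Γ : Ctx} {o : ObsCtx Γ} (h : Den P Γ o) :
    NameFree P (forgetNames (entries Γ o)) := by
  induction h with
  | fwd x y A a => exact ⟨⟨A, a⟩, by simp [entries, TypedObs.dual]⟩
  | close x => simp [entries, NameFree, atoms]
  | nil => rfl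
  | wait x _ ih => exact ⟨_, forgetNames_cons, ih⟩
  | out x y _ _ ihP ihQ =>
    refine ⟨⟨_, _⟩, ⟨_, _⟩, _, _, ?_, forgetNames_cons ▸ ihP, forgetNames_cons ▸ ihQ⟩
    simp [entries, entries_appObs, atoms, TypedObs.tensor]
  | inp x y _ ih =>
    refine ⟨⟨_, _⟩, ⟨_, _⟩, _, forgetNames_cons, ?_⟩
    simpa only [entries, forgetNames_cons] using ih
  | selL | selR | casL | casR | cut => trivial
  | @server x y P A Θ runs _ _ ih =>
    refine ⟨A, ↑(runs.map fun r => (r.1, forgetNames (entries (QCtx Θ) r.2))), ?_, fun r hr => ?_⟩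
    · simp only [entries, forgetNames_cons, forgetNames_entries_qSum, Multiset.map_coe,
        List.map_map, Multiset.sum_coe]
      rfl
    · obtain ⟨run, hrun, rfl⟩ := List.mem_map.1 (Multiset.mem_coe.1 hr)
      exact ⟨isQuest_of_mem_forgetNames_entries_qCtx Θ run.2, forgetNames_cons ▸ ih run hrun⟩
  | client x y _ ih => exact ⟨⟨_, _⟩, _, forgetNames_cons, forgetNames_cons ▸ ih⟩
  | weaken x A _ ih =>
    have weakened : atoms ⟨.quest A, (0 : Multiset (Obs A))⟩ = 0 := rfl
    simpa only [entries, forgetNames_cons, weakened, zero_add] using ih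
  | contract x₁ x₂ A _ ih =>
    rw [nameFree_rename]
    simpa only [entries, forgetNames_cons, atoms, Multiset.map_add, add_assoc] using ih
  | mix2 _ _ ihP ihQ => exact ⟨_, _, by simp [entries_appObs], ihP, ihQ⟩
  | exch _ hperm ih => exact hperm.entries_eq ▸ ih

theorem Denotes.nameFree {P : Proc} {M : Multiset NamedObs} (h : Denotes P M) :
    NameFree P (forgetNames M) := by
  obtain ⟨Γ, o, rfl, h⟩ := h
  exact h.nameFree

/-! ### The two halves of the synchronizer for `!` -/

/-- One unit `k : (P ⊗ ⊥) ⅋ ((W ⊗ ⊥) ⅋ 1)` of the resource pool: it hands out the two endpoints of a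
fresh copy of `S`, which are `k + 3 : P` and `k + 4 : W`. -/
def Proc.package (k : Name) (S : Proc) : Proc :=
  .inp k (k + 1) (.inp k (k + 2) (.par (.close k)
    (.outWait (k + 2) (k + 4) (.outWait (k + 1) (k + 3) S))))

/-- Serves one request at `m + 2 : Y`: takes a package from the pool `m : ?(X^⊥ ⊗ Y^⊥)` and connects
its two ends to a new query at `m + 1 : ?X` and to the request. -/
def Proc.dispatch (m : Name) : Proc :=
  .client m (m + 3) (.client (m + 1) (m + 4)
    (.out (m + 3) (m + 5) (.fwd (m + 4) (m + 5)) (.fwd (m + 2) (m + 3))))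

/-- Serves requests at `y : !Y`, using the queries of `x : ?X ⅋ 1` and the pool `m`. -/
def Proc.dispatcher (x y m : Name) : Proc :=
  .inp x (m + 1) (.par (.close x) (.server y (m + 2) (.dispatch m)))

section Bang

variable {k m x y : Name} {S : Proc} {P W X Y : Form}

theorem HasType.package (h : HasType S {(k + 3, P), (k + 4, W)}) :
    HasType (.package k S) {(k, .parr (.tensor P .bot) (.parr (.tensor W .bot) .one))} := by
  refine .inp (M := 0) ?_
  rw [Multiset.cons_zero, cons_singleton_comm]
  refine .inp ?_
  rw [Multiset.cons_swap]
  refine .close_par (.outWait ?_)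
  rw [cons_singleton_comm]
  exact h.outWait

theorem denotes_package_iff (hW : ¬ IsQuest W)
    {e : Obs (.parr (.tensor P .bot) (.parr (.tensor W .bot) .one))} :
    Denotes (.package k S) {ent k (.parr (.tensor P .bot) (.parr (.tensor W .bot) .one)) e} ↔
      Denotes S {ent (k + 3) P e.1.1, ent (k + 4) W e.2.1.1} := by
  rw [← Multiset.cons_zero, Proc.package, denotes_inp_iff (by simp) (by simp), Multiset.cons_zero,
    cons_singleton_comm, denotes_inp_iff (by simp) (by simp [IsQuest]), Multiset.cons_swap,
    denotes_close_par_iff (by simp) (by simp [IsQuest]),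
    denotes_outWait_iff (by simp) (by simp [IsQuest]), cons_singleton_comm,
    denotes_outWait_iff (by simp) (by simpa)]
  rfl

theorem HasType.dispatch : HasType (.dispatch m)
    {(m + 2, Y), (m + 1, .quest X), (m, .quest (.tensor X.dual Y.dual))} := by
  have request : HasType (.fwd (m + 2) (m + 3)) {(m + 3, Y.dual), (m + 2, Y)} :=
    Multiset.pair_comm (m + 2, Y) _ ▸ .fwd
  have query : HasType (.fwd (m + 4) (m + 5)) {(m + 5, X.dual), (m + 4, X)} :=
    Multiset.pair_comm (m + 4, X) _ ▸ .fwd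
  rw [Multiset.insert_eq_cons, Multiset.insert_eq_cons, cons_cons_singleton_rotate]
  refine .client ?_
  rw [cons_cons_singleton_rotate]
  refine .client ?_
  rw [Multiset.cons_swap]
  exact .out query request

theorem Denotes.dispatch (p : Obs X) (q : Obs Y) : Denotes (.dispatch m)
    {ent (m + 2) Y q, ent (m + 1) (.quest X) ({p} : Multiset (Obs X)),
      ent m (.quest (.tensor X.dual Y.dual))
        ({(dualObs X p, dualObs Y q)} : Multiset (Obs X.dual × Obs Y.dual))} := by
  have request : Denotes (.fwd (m + 2) (m + 3))
      {ent (m + 3) Y.dual (dualObs Y q), ent (m + 2) Y q} :=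
    Multiset.pair_comm (ent (m + 2) Y q) _ ▸ .fwd
  have query : Denotes (.fwd (m + 4) (m + 5))
      {ent (m + 5) X.dual (dualObs X p), ent (m + 4) X p} :=
    Multiset.pair_comm (ent (m + 4) X p) _ ▸ .fwd
  rw [Multiset.insert_eq_cons, Multiset.insert_eq_cons, cons_cons_singleton_rotate]
  refine .client (A := .tensor X.dual Y.dual) ?_
  rw [cons_cons_singleton_rotate]
  refine .client ?_
  rw [Multiset.cons_swap]
  exact .out query request

theorem HasType.dispatcher : HasType (.dispatcher x y m)
    {(m, .quest (.tensor X.dual Y.dual)), (x, .parr (.quest X) .one), (y, .bang Y)} := by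
  rw [Multiset.insert_eq_cons, Multiset.insert_eq_cons, Multiset.cons_swap]
  refine .inp ?_
  rw [Multiset.cons_swap]
  refine .close_par ?_
  rw [cons_cons_singleton_rotate]
  exact .server (Θ := [(m + 1, X), (m, .tensor X.dual Y.dual)]) .dispatch

theorem qSum_map_singleton {ι : Type*} {A B : Form} (f : ι → Obs A) (g : ι → Obs B)
    (runs : List ι) :
    qSum [(x, A), (y, B)] (runs.map fun i => (({f i} : Multiset (Obs A)),
      ({g i} : Multiset (Obs B)), ())) =
      ((↑(runs.map f) : Multiset (Obs A)), (↑(runs.map g) : Multiset (Obs B)), ()) := by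
  induction runs with
  | nil => rfl
  | cons i runs ih => exact congrArg (qAdd [(x, A), (y, B)] _) ih

theorem Denotes.dispatcher (es : Multiset (Obs X × Obs Y)) (u : Unit) :
    Denotes (.dispatcher x y m)
      {ent m (.quest (.tensor X.dual Y.dual))
          (es.map fun e => (dualObs X e.1, dualObs Y e.2) : Multiset (Obs X.dual × Obs Y.dual)),
        ent x (.parr (.quest X) .one) ((es.map Prod.fst : Multiset (Obs X)), u),
        ent y (.bang Y) (es.map Prod.snd : Multiset (Obs Y))} := by
  induction es using Quotient.inductionOn with | _ runs
  have served := Denotes.server (x := y) (runs := runs) (f := Prod.snd)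
    (Θ := [(m + 1, X), (m, .tensor X.dual Y.dual)])
    (θ := fun e => (({e.1} : Multiset (Obs X)),
      ({(dualObs X e.1, dualObs Y e.2)} : Multiset (Obs X.dual × Obs Y.dual)), ()))
    .dispatch fun e _ => Denotes.dispatch e.1 e.2
  rw [qSum_map_singleton (x := m + 1) (y := m) (B := .tensor X.dual Y.dual)] at served
  rw [Multiset.insert_eq_cons, Multiset.insert_eq_cons, Multiset.cons_swap]
  refine .inp ?_
  rw [Multiset.cons_swap]
  refine .close_par ?_
  rw [cons_cons_singleton_rotate]
  exact served

end Bang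

section Pool

variable {k m x y : Name} {S : Proc} {X Y : Form}

theorem HasType.server_singleton (h : HasType S {(k, X)}) :
    HasType (.server m k S) {(m, .bang X)} :=
  .server (Θ := []) h

theorem Denotes.server_singleton {es : Multiset (Obs X)} (hS : HasType S {(k, X)})
    (h : ∀ e ∈ es, Denotes S {ent k X e}) : Denotes (.server m k S) {ent m (.bang X) es} := by
  induction es using Quotient.inductionOn with | _ runs
  have served := Denotes.server (x := m) (Θ := []) (f := id) (θ := fun _ => ()) hS h
  rwa [List.map_id] at served

theorem HasType.cut_dispatcher (h : HasType S {(k, .parr X Y)}) :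
    HasType (.cut m (.server m k S) (.dispatcher x y m))
      {(x, .parr (.quest X) .one), (y, .bang Y)} :=
  .cut (M := 0) (.server_singleton h) .dispatcher

theorem Denotes.cut_dispatcher {es : Multiset (Obs X × Obs Y)} {u : Unit}
    (hS : HasType S {(k, .parr X Y)}) (h : ∀ e ∈ es, Denotes S {ent k (.parr X Y) e}) :
    Denotes (.cut m (.server m k S) (.dispatcher x y m))
      {ent x (.parr (.quest X) .one) ((es.map Prod.fst : Multiset (Obs X)), u),
        ent y (.bang Y) (es.map Prod.snd : Multiset (Obs Y))} :=
  .cut (M := 0) (A := .bang (.parr X Y)) (.server_singleton hS h) (.dispatcher es u)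

end Pool

/-! ### Soundness of the synchronizer for `!` -/

theorem eq_of_cons_eq_cons_of_isQuest {s t : TypedObs} {q u : Multiset TypedObs}
    (ht : ¬ IsQuest t.1) (hq : ∀ r ∈ q, IsQuest r.1) (h : s ::ₘ q = t ::ₘ u) : s = t ∧ q = u := by
  obtain h | ⟨_, v, rfl, _⟩ := Multiset.cons_eq_cons.1 h
  · exact h
  · exact absurd (hq t (Multiset.mem_cons_self _ _)) ht

theorem NameFree.exists_eq_parr_of_package {k : Name} {S : Proc} {s : TypedObs}
    {q : Multiset TypedObs} (hq : ∀ r ∈ q, IsQuest r.1)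
    (h : NameFree (.package k S) (atoms s + q)) :
    ∃ A B, s.1 = .parr A B ∧ (IsParr A ∨ IsParr B) := by
  obtain ⟨r, r', u, hu, r₂, r₂', v, hv, _⟩ := h
  have mem_s : r.parr r' ∈ atoms s := by
    have mem : r.parr r' ∈ atoms s + q := hu ▸ Multiset.mem_cons_self _ _
    exact (Multiset.mem_add.1 mem).resolve_right fun h => by
      obtain ⟨_, ⟨⟩⟩ := hq _ h
  obtain rfl := eq_of_mem_atoms (by rintro ⟨_, ⟨⟩⟩) mem_s
  obtain rfl : q = u := by
    rw [atoms_of_not_isQuest (by rintro ⟨_, ⟨⟩⟩)] at hu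
    exact (Multiset.cons_inj_right _).1 hu
  have mem : r₂.parr r₂' ∈ atoms r + (atoms r' + q) := hv ▸ Multiset.mem_cons_self _ _
  refine ⟨r.1, r'.1, rfl, ?_⟩
  rw [Multiset.mem_add, Multiset.mem_add] at mem
  obtain mem | mem | mem := mem
  · exact .inl (eq_of_mem_atoms (by rintro ⟨_, ⟨⟩⟩) mem ▸ ⟨_, _, rfl⟩)
  · exact .inr (eq_of_mem_atoms (by rintro ⟨_, ⟨⟩⟩) mem ▸ ⟨_, _, rfl⟩)
  · obtain ⟨_, ⟨⟩⟩ := hq _ mem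

theorem NameFree.eq_pair_of_fwd {x y : Name} {s : TypedObs} {t : Multiset TypedObs}
    (h : NameFree (.fwd x y) t) (hst : s ∈ t) (hs : ¬ IsQuest s.1) (hs' : ¬ IsQuest s.dual.1) :
    t = {s, s.dual} := by
  obtain ⟨r, rfl⟩ := h
  obtain hr | hr := Multiset.mem_add.1 hst
  · obtain rfl := eq_of_mem_atoms hs hr
    rw [atoms_of_not_isQuest hs, atoms_of_not_isQuest hs']
    rfl
  · obtain rfl : r = s.dual := by rw [← eq_of_mem_atoms hs hr, TypedObs.dual_dual]
    rw [TypedObs.dual_dual, atoms_of_not_isQuest hs, atoms_of_not_isQuest hs']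
    exact Multiset.pair_comm _ _

theorem NameFree.of_server {x y : Name} {P : Proc} {t : Multiset TypedObs} {s : TypedObs}
    (h : NameFree (.server x y P) t) (hs : s ∈ t) (hsq : ¬ IsQuest s.1) :
    ∃ (A : Form) (runs : Multiset (Obs A × Multiset TypedObs)),
      s = ⟨.bang A, runs.map Prod.fst⟩ ∧ t = s ::ₘ (runs.map Prod.snd).sum ∧
      ∀ r ∈ runs, (∀ s ∈ r.2, IsQuest s.1) ∧ NameFree P (atoms ⟨A, r.1⟩ + r.2) := by
  obtain ⟨A, runs, rfl, hruns⟩ := h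
  obtain rfl | hs := Multiset.mem_cons.1 hs
  · exact ⟨A, runs, rfl, rfl, hruns⟩
  · obtain ⟨_, hr, hsr⟩ := Multiset.mem_join.1 hs
    obtain ⟨r, hr', rfl⟩ := Multiset.mem_map.1 hr
    exact absurd ((hruns r hr').1 s hsr) hsq

theorem NameFree.eq_dual_of_fwd_of_fwd {w x y z : Name} {a b s t : TypedObs}
    {q γ δ : Multiset TypedObs} (hs : IsTensor s.1) (ha : IsTensor a.1)
    (hq : ∀ r ∈ q, IsQuest r.1) (hγδ : γ + δ = s ::ₘ t ::ₘ q)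
    (hγ : NameFree (.fwd w x) (atoms a + γ)) (hδ : NameFree (.fwd y z) (atoms b + δ)) :
    a = t.dual ∧ b = s.dual ∧ q = 0 := by
  have atoms_a := atoms_of_not_isQuest ha.not_isQuest
  obtain rfl : γ = {a.dual} := by
    have hpair := hγ.eq_pair_of_fwd (s := a) (by simp [atoms_a]) ha.not_isQuest ha.not_isQuest_dual
    rw [atoms_a] at hpair
    exact (Multiset.cons_inj_right _).1 hpair
  have a_dual_parr : IsParr a.dual.1 := ha.isParr_dual
  have a_dual_eq : a.dual = t := by
    have mem : a.dual ∈ s ::ₘ t ::ₘ q := hγδ ▸ by simp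
    simp only [Multiset.mem_cons] at mem
    obtain h | h | h := mem
    · exact absurd hs (h ▸ a_dual_parr.not_isTensor)
    · exact h
    · exact absurd (hq _ h) a_dual_parr.not_isQuest
  obtain rfl : δ = s ::ₘ q := by
    rw [a_dual_eq, Multiset.cons_swap] at hγδ
    exact (Multiset.cons_inj_right _).1 hγδ
  have hpair := hδ.eq_pair_of_fwd (s := s) (by simp) hs.not_isQuest hs.not_isQuest_dual
  rw [Multiset.add_cons] at hpair
  have hrest : atoms b + q = {s.dual} := (Multiset.cons_inj_right _).1 hpair
  have q_notMem : s.dual ∉ q := fun h => hs.not_isQuest_dual (hq _ h)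
  have b_mem : s.dual ∈ atoms b :=
    (Multiset.mem_add.1 (hrest ▸ Multiset.mem_singleton_self _)).resolve_right q_notMem
  obtain rfl := eq_of_mem_atoms hs.not_isQuest_dual b_mem
  rw [atoms_of_not_isQuest hs.not_isQuest_dual] at hrest
  exact ⟨by rw [← a_dual_eq, TypedObs.dual_dual], rfl, (Multiset.cons_inj_right _).1 hrest⟩

/-- The observations whose queries a dispatcher may pass on. The condition on the two components
makes sure that the forwarders of the dispatcher match them in only one way. -/
def Dispatchable (s : TypedObs) : Prop :=
  ∃ a b : TypedObs, s = a.tensor b ∧ (IsTensor a.1 ∨ IsTensor b.1 ∨ b.1 = .bot)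

theorem Dispatchable.isTensor {s : TypedObs} (h : Dispatchable s) : IsTensor s.1 := by
  obtain ⟨a, b, rfl, _⟩ := h
  exact ⟨a.1, b.1, rfl⟩

theorem NameFree.ne_bot_of_fwd {x y : Name} {b s t : TypedObs} {q γ δ : Multiset TypedObs}
    (hs : IsTensor s.1) (ht : IsParr t.1) (hq : ∀ r ∈ q, IsQuest r.1)
    (hγδ : γ + δ = s ::ₘ t ::ₘ q) (hδ : NameFree (.fwd x y) (atoms b + δ)) : b.1 ≠ .bot := by
  intro hb
  have b_notQuest : ¬ IsQuest b.1 := by simp [IsQuest, hb]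
  have b_dual : b.dual.1 = .one := congrArg Form.dual hb
  rw [atoms_of_not_isQuest b_notQuest] at hδ
  have hpair := hδ.eq_pair_of_fwd (s := b) (by simp) b_notQuest (by simp [IsQuest, b_dual])
  have mem : b.dual ∈ s ::ₘ t ::ₘ q := by
    rw [← hγδ, (Multiset.cons_inj_right _).1 hpair]
    simp
  simp only [Multiset.mem_cons] at mem
  obtain h | h | h := mem
  · simp [IsTensor, ← h, b_dual] at hs
  · simp [IsParr, ← h, b_dual] at ht
  · simpa [IsQuest, b_dual] using hq _ h

theorem Dispatchable.eq_of_fwd_of_fwd {w x y z : Name} {a b s t : TypedObs}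
    {q γ δ : Multiset TypedObs} (h : Dispatchable (a.tensor b)) (hs : IsTensor s.1)
    (ht : IsParr t.1) (hq : ∀ r ∈ q, IsQuest r.1) (hγδ : γ + δ = s ::ₘ t ::ₘ q)
    (hγ : NameFree (.fwd w x) (atoms a + γ)) (hδ : NameFree (.fwd y z) (atoms b + δ)) :
    q = 0 ∧ (a.tensor b = s.dual.tensor t.dual ∨ a.tensor b = t.dual.tensor s.dual) := by
  obtain ⟨a', b', hab, hshape⟩ := h
  obtain ⟨rfl, rfl⟩ := TypedObs.tensor_inj hab
  obtain ha | hb | hb := hshape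
  · obtain ⟨rfl, rfl, rfl⟩ := NameFree.eq_dual_of_fwd_of_fwd hs ha hq hγδ hγ hδ
    exact ⟨rfl, .inr rfl⟩
  · rw [add_comm] at hγδ
    obtain ⟨rfl, rfl, rfl⟩ := NameFree.eq_dual_of_fwd_of_fwd hs hb hq hγδ hδ hγ
    exact ⟨rfl, .inl rfl⟩
  · exact absurd hb (hδ.ne_bot_of_fwd hs ht hq hγδ)

theorem exists_eq_query_cons {t s : TypedObs} {q u : Multiset TypedObs}
    (ht : ¬ IsQuest t.1) (h : t ::ₘ q = s.query ::ₘ u) :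
    ∃ v, q = s.query ::ₘ v ∧ u = t ::ₘ v := by
  obtain ⟨rfl, _⟩ | ⟨_, v, hq, hu⟩ := Multiset.cons_eq_cons.1 h
  · exact absurd ⟨_, rfl⟩ ht
  · exact ⟨v, hq, hu⟩

theorem NameFree.of_dispatch {m : Name} {t : TypedObs} {q : Multiset TypedObs} (ht : IsParr t.1)
    (hq : ∀ r ∈ q, ∃ s : TypedObs, r = s.query ∧ Dispatchable s)
    (h : NameFree (.dispatch m) (t ::ₘ q)) : ∃ s : TypedObs,
      q = {s.query, (s.dual.tensor t.dual).query} ∨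
      q = {s.query, (t.dual.tensor s.dual).query} := by
  have dispatchable {s : TypedObs} (hs : s.query ∈ q) : Dispatchable s := by
    obtain ⟨s', hss', hs'⟩ := hq _ hs
    exact TypedObs.query_injective hss' ▸ hs'
  obtain ⟨s₁, _, hu, s₂, _, hv, a, b, γ, δ, hout, hγ, hδ⟩ := h
  obtain ⟨q₁, rfl, rfl⟩ := exists_eq_query_cons ht.not_isQuest hu
  have hs₁ := dispatchable (s := s₁) (by simp)
  rw [atoms_of_not_isQuest hs₁.isTensor.not_isQuest, Multiset.singleton_add, Multiset.cons_swap]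
    at hv
  obtain ⟨_, hv', rfl⟩ := exists_eq_query_cons ht.not_isQuest hv
  obtain ⟨q₂, rfl, rfl⟩ := exists_eq_query_cons hs₁.isTensor.not_isQuest hv'
  have hs₂ := dispatchable (s := s₂) (by simp)
  have hq₂ : ∀ r ∈ q₂, IsQuest r.1 := fun r hr => by
    obtain ⟨s, rfl, _⟩ := hq r (by simp [hr])
    exact ⟨_, rfl⟩
  rw [atoms_of_not_isQuest hs₂.isTensor.not_isQuest, Multiset.singleton_add] at hout
  have matched {s : TypedObs} (hab : Dispatchable (a.tensor b)) (hs : Dispatchable s)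
      (hγδ : γ + δ = s ::ₘ t ::ₘ q₂) :=
    hab.eq_of_fwd_of_fwd hs.isTensor ht hq₂ hγδ hγ hδ
  have mem : a.tensor b ∈ s₂ ::ₘ t ::ₘ s₁ ::ₘ q₂ := hout ▸ Multiset.mem_cons_self _ _
  simp only [Multiset.mem_cons] at mem
  obtain rfl | rfl | rfl | mem := mem
  · have hγδ := ((Multiset.cons_inj_right _).1 hout).symm
    rw [Multiset.cons_swap] at hγδ
    obtain ⟨rfl, h⟩ := matched hs₂ hs₁ hγδ
    exact ⟨s₁, h.imp (fun h => by rw [h]; rfl) fun h => by rw [h]; rfl⟩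
  · exact absurd ⟨_, _, rfl⟩ ht.not_isTensor
  · rw [Multiset.cons_swap t, Multiset.cons_swap s₂] at hout
    obtain ⟨rfl, h⟩ := matched hs₁ hs₂ ((Multiset.cons_inj_right _).1 hout).symm
    refine ⟨s₂, h.imp (fun h => ?_) fun h => ?_⟩ <;> rw [h] <;> exact Multiset.pair_comm _ _
  · obtain ⟨_, ⟨⟩⟩ := hq₂ _ mem

theorem NameFree.of_dispatcher {x y m : Name} {X B : Form} {α : Multiset (Obs X)} {u : Unit}
    {β : Multiset (Obs B)} {q : Multiset TypedObs} (hq : ∀ r ∈ q, IsQuest r.1)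
    (h : NameFree (.dispatcher x y m)
      (⟨.parr (.quest X) .one, (α, u)⟩ ::ₘ ⟨.bang B, β⟩ ::ₘ q)) :
    ∃ runs : Multiset (Obs B × Multiset TypedObs), β = runs.map Prod.fst ∧
      atoms ⟨.quest X, α⟩ + q = (runs.map Prod.snd).sum ∧
      ∀ r ∈ runs, (∀ s ∈ r.2, IsQuest s.1) ∧ NameFree (.dispatch m) (atoms ⟨B, r.1⟩ + r.2) := by
  obtain ⟨a, b, v, hv, _, w, hsplit, rfl, A, runs, rfl, hruns⟩ := h
  obtain ⟨rfl, rfl, rfl⟩ : a = ⟨.quest X, α⟩ ∧ b = ⟨.one, u⟩ ∧ v = ⟨.bang B, β⟩ ::ₘ q := by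
    obtain ⟨hab, rfl⟩ | ⟨_, v', hv', rfl⟩ := Multiset.cons_eq_cons.1 hv
    · obtain ⟨rfl, rfl⟩ := TypedObs.parr_inj (a := ⟨.quest X, α⟩) (b := ⟨.one, u⟩) hab
      exact ⟨rfl, rfl, rfl⟩
    · have mem : a.parr b ∈ ⟨.bang B, β⟩ ::ₘ q := hv' ▸ Multiset.mem_cons_self _ _
      obtain ⟨⟨⟩⟩ | mem := Multiset.mem_cons.1 mem
      obtain ⟨_, ⟨⟩⟩ := hq _ mem
  have hserver : ⟨.bang A, runs.map Prod.fst⟩ ::ₘ (runs.map Prod.snd).sum =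
      (⟨.bang B, β⟩ : TypedObs) ::ₘ (atoms ⟨.quest X, α⟩ + q) := by
    rw [add_left_comm, Multiset.add_cons] at hsplit
    exact ((Multiset.cons_inj_right _).1 hsplit).symm
  have hqueries : ∀ r ∈ atoms ⟨.quest X, α⟩ + q, IsQuest r.1 := fun r hr =>
    (Multiset.mem_add.1 hr).elim (isQuest_of_mem_atoms_quest r) (hq r)
  obtain ⟨hbang, hsum⟩ := eq_of_cons_eq_cons_of_isQuest (by simp [IsQuest]) hqueries hserver.symm
  cases hbang
  exact ⟨runs, rfl, hsum, hruns⟩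

theorem not_denotes_package_parr_tensor {k : Name} {S : Proc} {s t : TypedObs}
    (ht : ¬ IsQuest t.1) (hs : IsTensor s.1) :
    ¬ Denotes (.package k S) {(k, t.parr s)} := by
  intro h
  rw [← Multiset.cons_zero] at h
  have outer := (denotes_inp_iff (A := t.1) (B := s.1) (by simp) (by simp)).1 h
  obtain ⟨A, B, a, b, M, hM, _⟩ := outer.inverted (by simp [ht, hs.not_isQuest])
  have mem : ent k (.parr A B) (a, b) ∈ ent (k + 1) t.1 t.2 ::ₘ ent k s.1 s.2 ::ₘ 0 :=
    hM ▸ Multiset.mem_cons_self _ _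
  simp only [Multiset.mem_cons, Multiset.notMem_zero, or_false] at mem
  obtain h | h := mem
  · exact absurd (congrArg Prod.fst h) (Nat.ne_of_lt (Nat.lt_succ_self k))
  · exact absurd hs (IsParr.not_isTensor ⟨A, B, (congrArg (fun e : NamedObs => e.2.1) h).symm⟩)

theorem Denotes.exists_eq_parr_of_package {k : Name} {S : Proc} {e : TypedObs}
    (h : Denotes (.package k S) {(k, e)}) : ∃ A B, e.1 = .parr A B ∧ (IsParr A ∨ IsParr B) := by
  have atoms_eq : forgetNames {(k, e)} = atoms e + 0 :=
    forgetNames_singleton.trans (add_zero _).symm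
  exact NameFree.exists_eq_parr_of_package (by simp) (atoms_eq ▸ h.nameFree)

theorem Denotes.dispatchable_dual_of_package {k : Name} {S : Proc} {e : TypedObs}
    (h : Denotes (.package k S) {(k, e)}) : Dispatchable e.dual := by
  obtain ⟨A, B, he, hAB⟩ := h.exists_eq_parr_of_package
  obtain ⟨E, e⟩ := e
  obtain rfl : E = _ := he
  exact ⟨⟨A.dual, dualObs A e.1⟩, ⟨B.dual, dualObs B e.2⟩, rfl,
    hAB.imp IsParr.isTensor_dual fun h => .inl h.isTensor_dual⟩

theorem dispatchable_of_eq_tensor_bot {P : Form} {s : TypedObs} (hs : s.1 = .tensor P .bot) :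
    Dispatchable s := by
  obtain ⟨A, a⟩ := s
  obtain rfl : A = _ := hs
  exact ⟨⟨P, a.1⟩, ⟨.bot, a.2⟩, rfl, .inr (.inr rfl)⟩

/-- The observations queried by a dispatcher for `?(P ⊗ ⊥)` in a run against the pool `!E`: those of
`P ⊗ ⊥`, and the packages from the pool as the dispatcher sees them. -/
def Available (k : Name) (S : Proc) (P E : Form) (s : TypedObs) : Prop :=
  s.1 = .tensor P .bot ∨ ∃ e : TypedObs, s = e.dual ∧ e.1 = E ∧ Denotes (.package k S) {(k, e)}

theorem Available.dispatchable {k : Name} {S : Proc} {P E : Form} {s : TypedObs}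
    (h : Available k S P E s) : Dispatchable s := by
  obtain hs | ⟨e, rfl, _, he⟩ := h
  · exact dispatchable_of_eq_tensor_bot hs
  · exact he.dispatchable_dual_of_package

theorem NameFree.of_dispatch_pool {k m : Name} {S : Proc} {P E : Form} {t : TypedObs}
    {q : Multiset TypedObs} (ht : IsParr t.1)
    (hq : ∀ r ∈ q, ∃ s : TypedObs, r = s.query ∧ Available k S P E s)
    (h : NameFree (.dispatch m) (t ::ₘ q)) :
    ∃ s : TypedObs, s.1 = .tensor P .bot ∧ q = {s.query, (s.parr t).dual.query} ∧
      (s.parr t).1 = E ∧ Denotes (.package k S) {(k, s.parr t)} := by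
  have dispatchable (r) (hr : r ∈ q) : ∃ s : TypedObs, r = s.query ∧ Dispatchable s :=
    (hq r hr).imp fun _ => And.imp_right Available.dispatchable
  replace hq {s : TypedObs} (hs : s.query ∈ q) : Available k S P E s := by
    obtain ⟨s', hss', hs'⟩ := hq _ hs
    rwa [TypedObs.query_injective hss']
  have t_dual_ne : t.1.dual ≠ .bot := fun h => by simpa [IsTensor, h] using ht.isTensor_dual
  -- Two packages of the pool share the formula `E`, so matching them would make `E` a proper part
  -- of its own dual; `P ⊗ ⊥` can only meet a package in its first component.
  obtain ⟨s, rfl | rfl⟩ := h.of_dispatch ht dispatchable <;>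
    obtain hs | ⟨e, rfl, rfl, he⟩ := hq (s := s) (by simp)
  · obtain hr | ⟨e, hr, rfl, he⟩ := hq (s := s.dual.tensor t.dual) (by simp)
    · exact absurd (Form.tensor.inj hr).2 t_dual_ne
    · obtain rfl : s.parr t = e := TypedObs.dual_injective hr
      exact ⟨s, hs, rfl, rfl, he⟩
  · obtain hr | ⟨e', hr, he', _⟩ := hq (s := e.dual.dual.tensor t.dual) (by simp)
    · exact absurd (Form.tensor.inj hr).2 t_dual_ne
    · rw [TypedObs.dual_dual] at hr
      have formula_eq : e.1.tensor t.1.dual = e'.1.dual := congrArg Sigma.fst hr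
      exact absurd (he' ▸ formula_eq) (Form.tensor_ne_dual_left _ _)
  · obtain hr | ⟨e, hr, rfl, he⟩ := hq (s := t.dual.tensor s.dual) (by simp)
    · have s_dual : s.1.dual = .bot := (Form.tensor.inj hr).2
      simp [hs, Form.dual] at s_dual
    · obtain rfl : t.parr s = e := TypedObs.dual_injective hr
      exact absurd he (not_denotes_package_parr_tensor ht.not_isQuest ⟨_, _, hs⟩)
  · obtain hr | ⟨e', hr, he', _⟩ := hq (s := t.dual.tensor e.dual.dual) (by simp)
    · obtain ⟨A, B, he, _⟩ := he.exists_eq_parr_of_package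
      have e_bot : e.dual.dual.1 = .bot := (Form.tensor.inj hr).2
      simp [TypedObs.dual_dual, he] at e_bot
    · rw [TypedObs.dual_dual] at hr
      have formula_eq : t.1.dual.tensor e.1 = e'.1.dual := congrArg Sigma.fst hr
      exact absurd (he' ▸ formula_eq) (Form.tensor_ne_dual_right _ _)

theorem eq_map_fst_of_queries {X Y E : Form} {α : Multiset (Obs X)} {ρ : Multiset (Obs E)}
    {es : Multiset (Obs X × Obs Y)} (hX : X ≠ .tensor X.dual Y.dual) (hE : es ≠ 0 → E = .parr X Y)
    (h : atoms ⟨.quest X, α⟩ + ρ.map (fun e => (TypedObs.dual ⟨E, e⟩).query) =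
      (es.map fun e => ({TypedObs.query ⟨X, e.1⟩, (TypedObs.dual ⟨.parr X Y, e⟩).query} :
        Multiset TypedObs)).sum) : α = es.map Prod.fst := by
  obtain rfl | hes := eq_or_ne es 0
  · rw [Multiset.map_zero, Multiset.sum_zero, add_eq_zero] at h
    exact Multiset.map_eq_zero.1 h.1
  obtain rfl := hE hes
  have sum_eq : (es.map fun e => ({TypedObs.query ⟨X, e.1⟩,
      (TypedObs.dual ⟨.parr X Y, e⟩).query} : Multiset TypedObs)).sum =
      (es.map Prod.fst).map (fun a => TypedObs.query ⟨X, a⟩) +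
        es.map (fun e => (TypedObs.dual ⟨.parr X Y, e⟩).query) := by
    simp only [Multiset.insert_eq_cons, ← Multiset.singleton_add, Multiset.sum_map_add,
      Multiset.map_map, Function.comp_def]
    exact congrArg₂ _ (Multiset.bind_singleton _ _) (Multiset.bind_singleton _ _)
  have queries_mem (A : Form) (m : Multiset (Obs A)) :
      ∀ s ∈ m.map (fun a => TypedObs.query ⟨A, a⟩), s.1 = .quest A := by
    simp [TypedObs.query]
  have not_query (m : Multiset (Obs (.parr X Y))) :
      ∀ s ∈ m.map (fun e => (TypedObs.dual ⟨.parr X Y, e⟩).query), s.1 ≠ .quest X := by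
    simp only [Multiset.mem_map]
    rintro _ ⟨e, _, rfl⟩ h
    exact hX (Form.quest.inj h).symm
  rw [sum_eq] at h
  exact Multiset.map_injective (TypedObs.query_mk_injective X)
    (left_eq_of_add_eq_add (queries_mem X α) (not_query ρ) (queries_mem X _) (not_query es) h)

theorem NameFree.of_dispatcher_pool {k m x y : Name} {S : Proc} {P Y E : Form}
    {α : Multiset (Obs (.tensor P .bot))} {u : Unit} {β : Multiset (Obs Y)}
    {ρ : Multiset (Obs E)} (hY : IsParr Y)
    (hρ : ∀ e ∈ ρ, Denotes (.package k S) {ent k E e})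
    (h : NameFree (.dispatcher x y m) (⟨.parr (.quest (.tensor P .bot)) .one, (α, u)⟩ ::ₘ
      ⟨.bang Y, β⟩ ::ₘ ρ.map fun e => (TypedObs.dual ⟨E, e⟩).query)) :
    ∃ es : Multiset (Obs (.tensor P .bot) × Obs Y),
      (∀ e ∈ es, Denotes (.package k S) {ent k (.parr (.tensor P .bot) Y) e}) ∧
      α = es.map Prod.fst ∧ β = es.map Prod.snd := by
  obtain ⟨runs, rfl, hsum, hruns⟩ := h.of_dispatcher fun r hr => by
    obtain ⟨e, _, rfl⟩ := Multiset.mem_map.1 hr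
    exact ⟨_, rfl⟩
  have available {r} (hr : r ∈ runs) (q) (hq : q ∈ r.2) :
      ∃ s : TypedObs, q = s.query ∧ Available k S P E s := by
    have mem : q ∈ (runs.map Prod.snd).sum :=
      Multiset.mem_of_le (Multiset.le_sum_of_mem (Multiset.mem_map_of_mem _ hr)) hq
    rw [← hsum, Multiset.mem_add] at mem
    obtain mem | mem := mem
    · obtain ⟨a, _, rfl⟩ := Multiset.mem_map.1 mem
      exact ⟨_, rfl, .inl rfl⟩
    · obtain ⟨e, he, rfl⟩ := Multiset.mem_map.1 mem
      exact ⟨_, rfl, .inr ⟨⟨E, e⟩, rfl, rfl, hρ e he⟩⟩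
  have good (r) (hr : r ∈ runs) : ∃ e : Obs (.tensor P .bot) × Obs Y,
      (E = .parr (.tensor P .bot) Y ∧
        Denotes (.package k S) {ent k (.parr (.tensor P .bot) Y) e}) ∧
      r = (e.2, {TypedObs.query ⟨.tensor P .bot, e.1⟩,
        (TypedObs.dual ⟨.parr (.tensor P .bot) Y, e⟩).query}) := by
    have hdispatch := (hruns r hr).2
    rw [atoms_of_not_isQuest hY.not_isQuest] at hdispatch
    obtain ⟨⟨X, a⟩, hX, hq, hE, hpack⟩ := hdispatch.of_dispatch_pool hY (available hr)
    obtain rfl : X = _ := hX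
    exact ⟨(a, r.1), ⟨hE.symm, hpack⟩, Prod.ext rfl hq⟩
  obtain ⟨es, hes, rfl⟩ := exists_eq_map_of_forall_mem good
  have hα : α = es.map Prod.fst := by
    refine eq_map_fst_of_queries ?_ (fun h => ?_) (hsum.trans (congrArg _ (Multiset.map_map _ _ _)))
    · intro h
      simpa [IsTensor, ← (Form.tensor.inj h).2] using hY.isTensor_dual
    · obtain ⟨e, he⟩ := Multiset.exists_mem_of_ne_zero h
      exact (hes e he).1
  exact ⟨es, fun e he => (hes e he).2, hα, Multiset.map_map _ _ _⟩

theorem Denotes.of_server_singleton {m k : Name} {S : Proc} {s : TypedObs}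
    (h : Denotes (.server m k S) {(m, s)}) : ∃ (A : Form) (ρ : Multiset (Obs A)),
      s = ⟨.bang A, ρ⟩ ∧ ∀ e ∈ ρ, Denotes S {ent k A e} := by
  have hfree : NameFree (.server m k S) (atoms s) := by
    have := h.nameFree
    rwa [show forgetNames {(m, s)} = atoms s from forgetNames_singleton] at this
  have s_notQuest : ¬ IsQuest s.1 := by
    obtain ⟨A, runs, hs, _⟩ := hfree
    have mem : (⟨.bang A, runs.map Prod.fst⟩ : TypedObs) ∈ atoms s :=
      hs ▸ Multiset.mem_cons_self _ _
    rw [eq_of_mem_atoms (by simp [IsQuest]) mem]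
    simp [IsQuest]
  obtain ⟨A, ρ, hs, hρ⟩ := h.inverted (by simpa [Linear])
  exact ⟨A, ρ, (Prod.mk.inj (Multiset.singleton_inj.1 hs)).2, hρ⟩

section

variable {k m x y : Name} {S : Proc} {P W : Form}
  {α : Multiset (Obs (.tensor P .bot))} {u : Unit}
  {β : Multiset (Obs (.parr (.tensor W .bot) .one))}

theorem eq_zero_of_server_package {A : Form} {a : Obs A}
    (hserver : Denotes (.server m k (.package k S))
      {ent m A a, ent y (.bang (.parr (.tensor W .bot) .one)) β})
    (hdispatcher : Denotes (.dispatcher x y m)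
      {ent m A.dual (dualObs A a), ent x (.parr (.quest (.tensor P .bot)) .one) (α, u)}) :
    α = 0 ∧ β = 0 := by
  have bang_notQuest {B : Form} : ¬ IsQuest (.bang B) := by simp [IsQuest]
  obtain ⟨Y, runs, hβ, hsum, hruns⟩ := hserver.nameFree.of_server
    (mem_forgetNames (e := ent y (.bang (.parr (.tensor W .bot) .one)) β) (by simp) bang_notQuest)
    bang_notQuest
  cases hβ
  obtain rfl : runs = 0 := Multiset.eq_zero_of_forall_notMem fun r hr => by
    obtain ⟨_, _, ⟨⟩, ⟨_, _, ⟨⟩⟩ | ⟨_, _, ⟨⟩⟩⟩ :=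
      NameFree.exists_eq_parr_of_package (hruns r hr).1 (hruns r hr).2
  have a_atoms : atoms ⟨A, a⟩ = 0 := by
    rw [Multiset.insert_eq_cons, forgetNames_cons, forgetNames_singleton] at hsum
    exact add_eq_right.1 hsum
  obtain ⟨C, ⟨⟩⟩ := eq_quest_zero_of_atoms_eq_zero a_atoms
  have state : forgetNames {ent m (.bang C.dual) (0 : Multiset (Obs C.dual)),
        ent x (.parr (.quest (.tensor P .bot)) .one) (α, u)} =
      ⟨.parr (.quest (.tensor P .bot)) .one, (α, u)⟩ ::ₘ ⟨.bang C.dual, 0⟩ ::ₘ 0 := by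
    simp only [Multiset.insert_eq_cons, forgetNames_cons, forgetNames_singleton]
    exact add_comm _ _
  obtain ⟨runs, hruns, hsum, _⟩ := (state ▸ hdispatcher.nameFree).of_dispatcher (by simp)
  obtain rfl : runs = 0 := Multiset.map_eq_zero.1 hruns.symm
  exact ⟨Multiset.map_eq_zero.1 ((add_zero _).symm.trans hsum), rfl⟩

theorem exists_packages {A : Form} {a : Obs A}
    (hserver : Denotes (.server m k (.package k S)) {ent m A a})
    (hdispatcher : Denotes (.dispatcher x y m)
      {ent m A.dual (dualObs A a), ent x (.parr (.quest (.tensor P .bot)) .one) (α, u),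
        ent y (.bang (.parr (.tensor W .bot) .one)) β}) :
    ∃ es : Multiset (Obs (.tensor P .bot) × Obs (.parr (.tensor W .bot) .one)),
      (∀ e ∈ es, Denotes (.package k S)
        {ent k (.parr (.tensor P .bot) (.parr (.tensor W .bot) .one)) e}) ∧
      α = es.map Prod.fst ∧ β = es.map Prod.snd := by
  obtain ⟨E, ρ, hA, hρ⟩ := hserver.of_server_singleton
  cases hA
  have pool_atoms : atoms ⟨.quest E.dual, (ρ.map (dualObs E) : Multiset (Obs E.dual))⟩ =
      ρ.map fun e => (TypedObs.dual ⟨E, e⟩).query := Multiset.map_map _ _ _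
  have state : forgetNames {ent m (.quest E.dual) (ρ.map (dualObs E) : Multiset (Obs E.dual)),
        ent x (.parr (.quest (.tensor P .bot)) .one) (α, u),
        ent y (.bang (.parr (.tensor W .bot) .one)) β} =
      ⟨.parr (.quest (.tensor P .bot)) .one, (α, u)⟩ ::ₘ
        ⟨.bang (.parr (.tensor W .bot) .one), β⟩ ::ₘ
          ρ.map fun e => (TypedObs.dual ⟨E, e⟩).query := by
    simp only [Multiset.insert_eq_cons, forgetNames_cons, forgetNames_singleton, pool_atoms]
    rw [add_comm, add_assoc]
    rfl
  exact (state ▸ hdispatcher.nameFree).of_dispatcher_pool ⟨_, _, rfl⟩ hρ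

theorem exists_packages_of_cut
    (h : Denotes (.cut m (.server m k (.package k S)) (.dispatcher x y m))
      {ent x (.parr (.quest (.tensor P .bot)) .one) (α, u),
        ent y (.bang (.parr (.tensor W .bot) .one)) β}) :
    ∃ es : Multiset (Obs (.tensor P .bot) × Obs (.parr (.tensor W .bot) .one)),
      (∀ e ∈ es, Denotes (.package k S)
        {ent k (.parr (.tensor P .bot) (.parr (.tensor W .bot) .one)) e}) ∧
      α = es.map Prod.fst ∧ β = es.map Prod.snd := by
  obtain ⟨A, a, M₁, M₂, hM, hserver, hdispatcher⟩ := h.inverted (by simp [IsQuest])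
  have x_notMem : ent x (.parr (.quest (.tensor P .bot)) .one) (α, u) ∉ M₁ := fun hx => by
    have x_notQuest : ¬ IsQuest (.parr (.quest (.tensor P .bot)) .one) := by simp [IsQuest]
    obtain ⟨_, _, ⟨⟩, _⟩ := hserver.nameFree.of_server
      (mem_forgetNames (Multiset.mem_cons_of_mem hx) x_notQuest) x_notQuest
  obtain ⟨rfl, rfl⟩ | ⟨rfl, rfl⟩ | ⟨rfl, rfl⟩ | ⟨rfl, rfl⟩ := add_eq_pair_iff.1 hM.symm
  · simp at x_notMem
  · exact exists_packages hserver hdispatcher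
  · obtain ⟨rfl, rfl⟩ := eq_zero_of_server_package hserver hdispatcher
    exact ⟨0, by simp⟩
  · simp at x_notMem

end

/-! ### The synchronizer -/

namespace Realizable

variable {ι : Type*} {P W : Form} {f : ι → Obs P} {g : ι → Obs W}

theorem bang (h : Realizable P W f g) (hW : ¬ IsQuest W) :
    Realizable (.parr (.quest (.tensor P .bot)) .one) (.bang (.parr (.tensor W .bot) .one))
      (fun s : Multiset ι => (s.map fun i => (f i, ()), ()))
      (fun s => s.map fun i => ((g i, ()), ())) := by
  intro x y _
  let m := x + y + 1
  let package (i : ι) : Obs (.tensor P .bot) × Obs (.parr (.tensor W .bot) .one) :=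
    ((f i, ()), (g i, ()), ())
  obtain ⟨S, hS, hden⟩ := h (m + 3) (m + 4) (by omega)
  refine ⟨.cut m (.server m m (.package m S)) (.dispatcher x y m), .cut_dispatcher hS.package,
    fun p w => ⟨fun hp => ?_, ?_⟩⟩
  · obtain ⟨es, hes, hp₁, rfl⟩ := exists_packages_of_cut hp
    obtain ⟨s, -, rfl⟩ := exists_eq_map_of_forall_mem (p := fun _ => True) (f := package)
      fun e he => by
        obtain ⟨i, hf, hg⟩ := (hden _ _).1 ((denotes_package_iff hW).1 (hes e he))
        exact ⟨i, trivial, by simp only [package, hf, hg]⟩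
    rw [Multiset.map_map] at hp₁
    exact ⟨s, Prod.ext hp₁.symm rfl, (Multiset.map_map Prod.snd package s).symm⟩
  · rintro ⟨s, rfl, rfl⟩
    have pool_run := Denotes.cut_dispatcher (m := m) (x := x) (y := y) (u := ())
      (es := s.map package) hS.package fun e he => by
        obtain ⟨i, _, rfl⟩ := Multiset.mem_map.1 he
        exact (denotes_package_iff hW).2 ((hden _ _).2 ⟨i, rfl, rfl⟩)
    rwa [Multiset.map_map, Multiset.map_map] at pool_run

theorem congr {f' : ι → Obs P} {g' : ι → Obs W} (h : Realizable P W f g) (hf : ∀ i, f i = f' i)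
    (hg : ∀ i, g i = g' i) : Realizable P W f' g' :=
  funext hf ▸ funext hg ▸ h

theorem exists_tensor_bot (h : Realizable P W f g) (hP : ¬ IsQuest P) {z w s : ℕ} (hzw : z ≠ w)
    (hzs : z ≠ s) (hws : w ≠ s) :
    ∃ S, HasType S {(z, .tensor P .bot), (w, .tensor W .bot), (s, .one)} ∧ ∀ p q u,
      Denotes S {ent z (.tensor P .bot) p, ent w (.tensor W .bot) q, ent s .one u} ↔
        ∃ i, f i = p.1 ∧ g i = q.1 := by
  obtain ⟨S, hS, hden⟩ := h (z + w + 1) (z + w + 2) (by omega)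
  refine ⟨.par (.close s) (.outWait z (z + w + 1) (.outWait w (z + w + 2) S)), ?_, fun p q u => ?_⟩
  · rw [Multiset.insert_eq_cons, Multiset.insert_eq_cons, cons_cons_singleton_rotate]
    refine .close_par (.outWait ?_)
    rw [cons_singleton_comm]
    exact .outWait (cons_singleton_comm (z + w + 1, P) _ ▸ hS)
  · rw [Multiset.insert_eq_cons, Multiset.insert_eq_cons, cons_cons_singleton_rotate,
      denotes_close_par_iff (by simp [hzs, hws]) (by simp [IsQuest]),
      denotes_outWait_iff (by simpa using hzw.symm) (by simp [IsQuest]), cons_singleton_comm,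
      denotes_outWait_iff (by simp; omega) (by simpa), cons_singleton_comm]
    exact hden p.1 q.1

end Realizable

theorem not_isQuest_transL_dual (A : Form) : ¬ IsQuest (transL A).dual := by
  cases A <;> simp [transL, Form.dual, IsQuest]

theorem dualObs_Lmap_bang {A : Form} (s : Multiset (Obs A)) :
    dualObs (transL (.bang A)) (Lmap (.bang A) s) =
      (s.map fun a => (dualObs (transL A) (Lmap A a), ()), ()) :=
  Prod.ext (Multiset.map_map (dualObs (.parr (transL A) .one)) (fun a => (Lmap A a, ())) s) rfl

theorem dualObs_Lmap_quest {A : Form} (s : Multiset (Obs A)) :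
    dualObs (transL (.quest A)) (Lmap (.quest A) s) =
      s.map fun a => ((dualObs (transL A) (Lmap A a), ()), ()) :=
  Multiset.map_map (dualObs (.tensor (.parr (transL A) .one) .bot))
    (fun a => ((Lmap A a, ()), ())) s

theorem realizable_synchronizer (A : Form) :
    Realizable (transL A).dual (transL A.dual).dual (fun a => dualObs (transL A) (Lmap A a))
      (fun a => dualObs (transL A.dual) (Lmap A.dual (dualObs A a))) := by
  induction A with
  | one => exact .one
  | bot => exact Realizable.one.symm
  | tensor A B ihA ihB =>
    exact .tensor ihA ihB (not_isQuest_transL_dual _) (not_isQuest_transL_dual _)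
  | parr A B ihA ihB =>
    exact (ihA.symm.tensor ihB.symm (not_isQuest_transL_dual _) (not_isQuest_transL_dual _)).symm
  | oplus A B ihA ihB =>
    exact (ihA.oplus ihB (not_isQuest_transL_dual _) (not_isQuest_transL_dual _)).congr
      (by rintro (a | b) <;> rfl) (by rintro (a | b) <;> rfl)
  | wth A B ihA ihB =>
    have swapped := ihA.symm.oplus ihB.symm (not_isQuest_transL_dual _) (not_isQuest_transL_dual _)
    exact swapped.symm.congr (by rintro (a | b) <;> rfl) (by rintro (a | b) <;> rfl)
  | bang A ih =>
    refine (ih.bang (not_isQuest_transL_dual _)).congr (fun s => (dualObs_Lmap_bang s).symm)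
      fun s => ?_
    exact ((dualObs_Lmap_quest (s.map (dualObs A))).trans (Multiset.map_map _ (dualObs A) s)).symm
  | quest A ih =>
    refine (ih.symm.bang (not_isQuest_transL_dual _)).symm.congr
      (fun s => (dualObs_Lmap_quest s).symm) fun s => ?_
    refine ((dualObs_Lmap_bang (s.map (dualObs A))).trans ?_).symm
    exact Prod.ext (Multiset.map_map _ (dualObs A) s) rfl

/-- For every formula `A` and names `z, w, s`, there exists a synchronizer
`Sync^A_{z,w} ⊢ z:(A^⊥L)^⊥⊗⊥, w:((A^⊥)^⊥L)^⊥⊗⊥, s:1` with denotation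
`{ ((L_A a, *), (L_{A^⊥} a, *), *) | a ∈ ⟦A⟧ }`. -/
theorem synchronizer_exists (A : Form) (z w s : Name)
    (h1 : z ≠ w) (h2 : z ≠ s) (h3 : w ≠ s) :
    ∃ S : Proc,
      Types S [(z, .tensor (transL A).dual .bot), (w, .tensor (transL A.dual).dual .bot),
               (s, .one)] ∧
      Sem S [(z, .tensor (transL A).dual .bot), (w, .tensor (transL A.dual).dual .bot),
             (s, .one)] =
        {o | ∃ a : Obs A,
          o = ((dualObs (transL A) (Lmap A a), ()),
               ((dualObs (transL A.dual) (Lmap A.dual (dualObs A a)), ()), ((), ())))} := by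
  obtain ⟨S, hS, hden⟩ :=
    (realizable_synchronizer A).exists_tensor_bot (not_isQuest_transL_dual A) h1 h2 h3
  refine ⟨S, hasType_coe.1 hS, ?_⟩
  ext ⟨p, q, u, _⟩
  refine (denotes_entries.symm.trans (hden p q u)).trans (exists_congr fun a => ?_)
  constructor
  · rintro ⟨hp, hq⟩
    exact Prod.ext (Prod.ext hp.symm rfl) (Prod.ext (Prod.ext hq.symm rfl) rfl)
  · rintro h
    cases h
    exact ⟨rfl, rfl⟩

end PaS
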